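/- arXiv:1608.07516 — 3 statements merged into one kernel-verified Lean document; each statement's English description precedes it below -/
import Mathlib

section
/- Let n ≥ 2 and f ∈ C^{2n−1}(a,b). If the Hankel matrix M_n(t,f) = (f^{(i+j−1)}(t)/(i+j−1)!)_{1≤i,j≤n} is positive semi-definite for every t ∈ (a,b), then the Loewner matrix ([λᵢ,λⱼ]_f)_{1≤i,j≤n} is positive semi-definite for every tuple (λ₁,...,λₙ) ∈ (a,b)^n. -/
open Set Matrix

/-- Rolle's theorem for several zeros: between consecutive zeros of a function there are zeros of
its derivative. -/
theorem exists_finset_deriv_eq_zero {s : Set ℝ} (hs : s.OrdConnected) {g : ℝ → ℝ}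
    (hg : ∀ x ∈ s, DifferentiableAt ℝ g x) {m : ℕ} {Z : Finset ℝ} (hZ : Z.card = m + 1)
    (hZs : ∀ z ∈ Z, z ∈ s) (hZ0 : ∀ z ∈ Z, g z = 0) :
    ∃ Z' : Finset ℝ, Z'.card = m ∧ Disjoint Z Z' ∧ ∀ z ∈ Z', z ∈ s ∧ deriv g z = 0 := by
  classical
  set e := Z.orderEmbOfFin hZ
  have he : ∀ k, e k ∈ Z := Z.orderEmbOfFin_mem hZ
  have hsub (i : Fin m) : Icc (e i.castSucc) (e i.succ) ⊆ s :=
    hs.out (hZs _ (he _)) (hZs _ (he _))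
  have hc (i : Fin m) : ∃ c ∈ Ioo (e i.castSucc) (e i.succ), deriv g c = 0 :=
    exists_deriv_eq_zero (e.strictMono i.castSucc_lt_succ)
      (fun x hx => (hg x (hsub i hx)).continuousAt.continuousWithinAt)
      ((hZ0 _ (he _)).trans (hZ0 _ (he _)).symm)
  choose c hc hc0 using hc
  have hmono : StrictMono c := fun i j hij =>
    (hc i).2.trans_le <| (e.monotone (by simpa [Fin.le_def] using hij)).trans (hc j).1.le
  refine ⟨Finset.univ.image c, by simp [Finset.card_image_of_injective _ hmono.injective], ?_, ?_⟩
  · rw [Finset.disjoint_left]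
    intro z hz hz'
    obtain ⟨i, -, rfl⟩ := Finset.mem_image.1 hz'
    obtain ⟨k, hk⟩ : c i ∈ range e := by simpa [e] using hz
    have h1 := (hc i).1
    have h2 := (hc i).2
    rw [← hk, e.lt_iff_lt, Fin.lt_def] at h1 h2
    simp at h1 h2
    omega
  · intro z hz
    obtain ⟨i, -, rfl⟩ := Finset.mem_image.1 hz
    exact ⟨hsub i (Ioo_subset_Icc_self (hc i)), hc0 i⟩

/-- A function with `m + 1` zeros has a zero of its `m`-th derivative. -/
theorem exists_iteratedDeriv_eq_zero {s : Set ℝ} (hs : s.OrdConnected) {m : ℕ} {g : ℝ → ℝ}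
    (hg : ∀ k < m, ∀ x ∈ s, DifferentiableAt ℝ (iteratedDeriv k g) x)
    {Z : Finset ℝ} (hZ : Z.card = m + 1) (hZ0 : ∀ z ∈ Z, z ∈ s ∧ g z = 0) :
    ∃ x ∈ s, iteratedDeriv m g x = 0 := by
  induction m generalizing g Z with
  | zero =>
    obtain ⟨z, hz⟩ : Z.Nonempty := Finset.card_pos.1 (by omega)
    exact ⟨z, by simpa using hZ0 z hz⟩
  | succ m ih =>
    obtain ⟨Z', hZ', -, h0⟩ := exists_finset_deriv_eq_zero hs
      (fun x hx => by simpa using hg 0 (by omega) x hx) hZ (fun z hz => (hZ0 z hz).1)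
      (fun z hz => (hZ0 z hz).2)
    rw [iteratedDeriv_succ']
    refine ih (fun k hk x hx => ?_) hZ' h0
    rw [← iteratedDeriv_succ']
    exact hg _ (by omega) x hx

/-- A function with `n` double zeros has a zero of its derivative of order `2 * n - 1`. -/
theorem exists_iteratedDeriv_eq_zero_of_double_zeros {s : Set ℝ} (hs : s.OrdConnected)
    (hso : IsOpen s) {n : ℕ} (hn : 1 ≤ n) {g : ℝ → ℝ} (hg : ContDiffOn ℝ (2 * n - 1 : ℕ) g s)
    {Z : Finset ℝ} (hZ : Z.card = n) (hZ0 : ∀ z ∈ Z, z ∈ s ∧ g z = 0 ∧ deriv g z = 0) :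
    ∃ x ∈ s, iteratedDeriv (2 * n - 1) g x = 0 := by
  classical
  have hdiff : ∀ k < 2 * n - 1, ∀ x ∈ s, DifferentiableAt ℝ (iteratedDeriv k g) x := by
    intro k hk x hx
    have h := (hg.contDiffAt (hso.mem_nhds hx)).contDiffWithinAt (s := univ)
    rw [← differentiableWithinAt_univ, ← iteratedDerivWithin_univ]
    exact h.differentiableWithinAt_iteratedDerivWithin (by exact_mod_cast hk) (by simp)
  obtain ⟨n, rfl⟩ := Nat.exists_eq_add_of_le' hn
  obtain ⟨Z', hZ', hdisj, h0⟩ := exists_finset_deriv_eq_zero hs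
      (fun x hx => by simpa using hdiff 0 (by omega) x hx) hZ (fun z hz => (hZ0 z hz).1)
      (fun z hz => (hZ0 z hz).2.1)
  rw [show 2 * (n + 1) - 1 = 2 * n + 1 by omega] at *
  rw [iteratedDeriv_succ']
  refine exists_iteratedDeriv_eq_zero hs (Z := Z ∪ Z') (fun k hk x hx => ?_) ?_ ?_
  · rw [← iteratedDeriv_succ']
    exact hdiff _ (by omega) x hx
  · rw [Finset.card_union_of_disjoint hdisj]
    omega
  · intro z hz
    rcases Finset.mem_union.1 hz with hz | hz
    · exact ⟨(hZ0 z hz).1, (hZ0 z hz).2.2⟩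
    · exact h0 z hz

open Polynomial in
theorem Polynomial.iteratedDeriv_eval (p : ℝ[X]) (k : ℕ) :
    iteratedDeriv k (fun x => p.eval x) = fun x => (derivative^[k] p).eval x := by
  induction k with
  | zero => simp
  | succ k ih =>
    ext x
    rw [iteratedDeriv_succ, ih, Polynomial.deriv, Function.iterate_succ_apply']

theorem iteratedDeriv_sub_pow_mul {m N : ℕ} (hm : m ≤ N) {f : ℝ → ℝ} {t : ℝ}
    (hf : ContDiffAt ℝ N f t) :
    iteratedDeriv N (fun x => (x - t) ^ m * f x) t =
      N.factorial * (iteratedDeriv (N - m) f t / (N - m).factorial) := by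
  have hpow (i : ℕ) : iteratedDeriv i (fun x => (x - t) ^ m) t =
      if i = m then (m.factorial : ℝ) else 0 := by
    have h := congrFun (iteratedDeriv_comp_sub_const i (fun x : ℝ => x ^ m) t) t
    rw [h]
    simpa using iteratedDeriv_fun_pow_zero (𝕜 := ℝ) (n := i) (m := m)
  rw [iteratedDeriv_fun_mul (by fun_prop) hf, Finset.sum_eq_single_of_mem m (by simp; omega)]
  · rw [hpow, if_pos rfl, ← Nat.choose_mul_factorial_mul_factorial hm]
    have := Nat.factorial_ne_zero (N - m)
    push_cast
    field_simp
  · intro i _ hi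
    simp [hpow, hi]

open Polynomial in
/-- The derivative of order `2 * n - 1` of `q ^ 2 * f`, for a polynomial `q` of degree less than
`n`, is up to a factorial a value of the quadratic form of the Hankel matrix of `f`. -/
theorem iteratedDeriv_sq_mul_eq_hankel {n : ℕ} (hn : 1 ≤ n) {f : ℝ → ℝ} {t : ℝ}
    (hf : ContDiffAt ℝ (2 * n - 1 : ℕ) f t) {q : ℝ[X]} (hq : q.natDegree < n) :
    iteratedDeriv (2 * n - 1) (fun x => q.eval x ^ 2 * f x) t =
      (2 * n - 1).factorial * ∑ i : Fin n, ∑ j : Fin n,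
        (taylor t q).coeff i.rev * (taylor t q).coeff j.rev *
          (iteratedDeriv (i.val + j.val + 1) f t / (i.val + j.val + 1).factorial) := by
  set r := (taylor t q).coeff
  have hqr (x : ℝ) : q.eval x = ∑ i : Fin n, r i.rev * (x - t) ^ (i.rev : ℕ) := by
    have hrev := Equiv.sum_comp Fin.revPerm (fun i : Fin n => r i * (x - t) ^ (i : ℕ))
    simp only [Fin.revPerm_apply] at hrev
    rw [hrev, ← taylor_eval_sub t, eval_eq_sum_range' (n := n) (by simpa using hq),
      Finset.sum_range (fun i => r i * (x - t) ^ i)]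
  have hfun : (fun x => q.eval x ^ 2 * f x) = fun x => ∑ i : Fin n, ∑ j : Fin n,
      (r i.rev * r j.rev) * ((x - t) ^ ((i.rev : ℕ) + j.rev) * f x) := by
    ext x
    rw [hqr, sq, Finset.sum_mul_sum, Finset.sum_mul]
    refine Finset.sum_congr rfl fun i _ => ?_
    rw [Finset.sum_mul]
    refine Finset.sum_congr rfl fun j _ => ?_
    ring
  rw [hfun, iteratedDeriv_fun_sum (fun i _ => by fun_prop), Finset.mul_sum]
  refine Finset.sum_congr rfl fun i _ => ?_
  rw [iteratedDeriv_fun_sum (fun i _ => by fun_prop), Finset.mul_sum]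
  refine Finset.sum_congr rfl fun j _ => ?_
  have hi := i.isLt
  have hj := j.isLt
  rw [iteratedDeriv_const_mul_field,
    iteratedDeriv_sub_pow_mul (by simp only [Fin.val_rev]; omega) hf,
    show 2 * n - 1 - ((i.rev : ℕ) + j.rev) = i + j + 1 by simp only [Fin.val_rev]; omega]
  ring

theorem Polynomial.contDiff_eval (p : Polynomial ℝ) {k : WithTop ℕ∞} :
    ContDiff ℝ k fun x => p.eval x := by
  simpa using p.contDiff_aeval (𝕜 := ℝ) k

open Polynomial in
/-- The Loewner matrix of `f` at distinct points of an open interval is positive semi-definite if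
the Hankel matrices of `f` are. -/
theorem posSemidef_loewner_of_injective {n : ℕ} (hn : 1 ≤ n) {a b : ℝ} {f : ℝ → ℝ}
    (hf : ContDiffOn ℝ (2 * n - 1 : ℕ) f (Ioo a b))
    (hM : ∀ t ∈ Ioo a b,
      (Matrix.of fun i j : Fin n =>
        iteratedDeriv (i.val + j.val + 1) f t /
          (Nat.factorial (i.val + j.val + 1) : ℝ)).PosSemidef)
    {lam : Fin n → ℝ} (hlam : ∀ i, lam i ∈ Ioo a b) (hinj : Function.Injective lam) :
    (Matrix.of fun i j : Fin n =>
      if lam i = lam j then deriv f (lam i)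
      else (f (lam i) - f (lam j)) / (lam i - lam j)).PosSemidef := by
  classical
  set L : Fin n → Fin n → ℝ := fun i j => if lam i = lam j then deriv f (lam i)
      else (f (lam i) - f (lam j)) / (lam i - lam j) with hL
  refine PosSemidef.of_dotProduct_mulVec_nonneg ?_ fun v => ?_
  · ext i j
    simp only [conjTranspose_apply, of_apply, star_trivial, hL, eq_comm (a := lam j)]
    split_ifs with h
    · rw [h]
    · rw [← neg_sub (f (lam i)), ← neg_sub (lam i), neg_div_neg_eq]
  let P : Fin n → ℝ[X] := fun i => ∏ k ∈ Finset.univ.erase i, (X - C (lam k))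
  let ℓ : Fin n → Fin n → ℝ[X] := fun i j => C (f (lam i)) + C (L i j) * (X - C (lam i))
  let q : ℝ[X] := ∑ i, C (v i) * P i
  let H : ℝ[X] := ∑ i, ∑ j, C (v i * v j) * (P i * P j * ℓ i j)
  have hPdeg (i) : (P i).natDegree = n - 1 := by simp [P]
  have hPmonic (i) : (P i).Monic := monic_prod_X_sub_C _ _
  have hPeval {i k} (h : k ≠ i) : (P i).eval (lam k) = 0 := by
    rw [eval_prod]
    exact Finset.prod_eq_zero (Finset.mem_erase.2 ⟨h, Finset.mem_univ k⟩) (by simp)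
  have hqdeg : q.natDegree < n := by
    refine lt_of_le_of_lt (natDegree_sum_le_of_forall_le (n := n - 1) _ _ fun i _ => ?_) (by omega)
    exact (natDegree_C_mul_le _ _).trans (hPdeg i).le
  have hPP (i j) : (P i * P j).natDegree = 2 * n - 2 := by
    rw [(hPmonic i).natDegree_mul (hPmonic j), hPdeg, hPdeg]; omega
  have hℓdeg (i j) : (ℓ i j).natDegree ≤ 1 := by simp only [ℓ]; compute_degree
  have hPPℓ (i j) : (P i * P j * ℓ i j).natDegree ≤ 2 * n - 1 :=
    (natDegree_mul_le_of_le (hPP i j).le (hℓdeg i j)).trans (by omega)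
  have hHdeg : H.natDegree ≤ 2 * n - 1 :=
    natDegree_sum_le_of_forall_le _ _ fun i _ => natDegree_sum_le_of_forall_le _ _ fun j _ =>
      (natDegree_C_mul_le _ _).trans (hPPℓ i j)
  have hcoeff (i j) : (P i * P j * ℓ i j).coeff (2 * n - 1) = L i j := by
    rw [show 2 * n - 1 = 2 * n - 2 + 1 by omega,
      coeff_mul_add_eq_of_natDegree_le (hPP i j).le (hℓdeg i j), ← hPP i j,
      ((hPmonic i).mul (hPmonic j)).coeff_natDegree]
    simp [ℓ]
  have hHcoeff : H.coeff (2 * n - 1) = ∑ i, ∑ j, v i * v j * L i j := by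
    simp only [H, finsetSum_coeff, coeff_C_mul, hcoeff]
  have hHder (t : ℝ) : iteratedDeriv (2 * n - 1) (fun x => H.eval x) t =
      (2 * n - 1).factorial * ∑ i, ∑ j, v i * v j * L i j := by
    have hconst : derivative^[2 * n - 1] H = C ((2 * n - 1).factorial * H.coeff (2 * n - 1)) := by
      ext m
      rw [coeff_iterate_derivative, coeff_C]
      split_ifs with h
      · simp [h, Nat.descFactorial_self]
      · rw [coeff_eq_zero_of_natDegree_lt (by omega), smul_zero]
    simp only [iteratedDeriv_eval, hconst, eval_C, hHcoeff]
  have herr : (fun x => q.eval x ^ 2 * f x - H.eval x) = fun x => ∑ i, ∑ j,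
      v i * v j * ((P i * P j).eval x * (f x - (ℓ i j).eval x)) := by
    ext x
    simp only [q, H, eval_finsetSum, eval_mul, eval_C, sq, Finset.sum_mul, Finset.mul_sum,
      ← Finset.sum_sub_distrib]
    refine Finset.sum_congr rfl fun i _ => Finset.sum_congr rfl fun j _ => ?_
    ring
  have hℓi (i j) : (ℓ i j).eval (lam i) = f (lam i) := by simp [ℓ]
  have hℓj (i j) : (ℓ i j).eval (lam j) = f (lam j) := by
    rcases eq_or_ne i j with rfl | hij
    · exact hℓi i i
    have h1 : lam i ≠ lam j := hinj.ne hij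
    have h2 := sub_ne_zero.2 h1
    simp only [ℓ, hL, if_neg h1, eval_add, eval_mul, eval_sub, eval_C, eval_X]
    field_simp
    ring
  have hfd {x} (hx : x ∈ Ioo a b) : HasDerivAt f (deriv f x) x :=
    ((hf.contDiffAt (isOpen_Ioo.mem_nhds hx)).differentiableAt
      (by exact_mod_cast (by omega : 2 * n - 1 ≠ 0))).hasDerivAt
  have hterm (i j k) : (P i * P j).eval (lam k) * (f (lam k) - (ℓ i j).eval (lam k)) = 0 ∧
      HasDerivAt (fun x => (P i * P j).eval x * (f x - (ℓ i j).eval x)) 0 (lam k) := by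
    have hd := ((P i * P j).hasDerivAt (lam k)).mul
      ((hfd (hlam k)).sub ((ℓ i j).hasDerivAt (lam k)))
    have hℓ' : (derivative (ℓ i j)).eval (lam k) = L i j := by simp [ℓ]
    rw [hℓ', derivative_mul, eval_add, eval_mul, eval_mul, eval_mul] at hd
    by_cases hi : k = i
    · subst hi
      refine ⟨by simp [hℓi], hd.congr_deriv ?_⟩
      rcases eq_or_ne k j with rfl | hj
      · simp [hℓi, hL]
      · simp [hℓi, hPeval hj]
    · refine ⟨by simp [hPeval hi], hd.congr_deriv ?_⟩
      rcases eq_or_ne k j with rfl | hj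
      · simp [hℓj, hPeval hi]
      · simp [hPeval hj, hPeval hi]
  have hcd {t : ℝ} (ht : t ∈ Ioo a b) : ContDiffAt ℝ (2 * n - 1 : ℕ) f t :=
    hf.contDiffAt (isOpen_Ioo.mem_nhds ht)
  have hqf : ContDiffOn ℝ (2 * n - 1 : ℕ) (fun x => q.eval x ^ 2 * f x) (Ioo a b) :=
    (q.contDiff_eval.pow 2).contDiffOn.mul hf
  obtain ⟨t, ht, h0⟩ := exists_iteratedDeriv_eq_zero_of_double_zeros ordConnected_Ioo isOpen_Ioo hn
    (g := fun x => q.eval x ^ 2 * f x - H.eval x) (hqf.sub H.contDiff_eval.contDiffOn)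
    (Z := Finset.univ.image lam) (by simp [Finset.card_image_of_injective _ hinj]) (by
      intro z hz
      obtain ⟨k, -, rfl⟩ := Finset.mem_image.1 hz
      refine ⟨hlam k, ?_, ?_⟩
      · rw [congrFun herr (lam k)]
        simp only [(hterm _ _ k).1, mul_zero, Finset.sum_const_zero]
      · rw [herr]
        refine HasDerivAt.deriv ?_
        simpa using HasDerivAt.fun_sum fun i (_ : i ∈ Finset.univ) =>
          HasDerivAt.fun_sum fun j (_ : j ∈ Finset.univ) =>
            ((hterm i j k).2.const_mul (v i * v j)))
  rw [iteratedDeriv_fun_sub (hqf.contDiffAt (isOpen_Ioo.mem_nhds ht)) H.contDiff_eval.contDiffAt,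
    hHder, iteratedDeriv_sq_mul_eq_hankel hn (hcd ht) hqdeg, sub_eq_zero] at h0
  have hfac : ((2 * n - 1).factorial : ℝ) ≠ 0 := by positivity
  have hnonneg := (hM t ht).dotProduct_mulVec_nonneg fun i => (taylor t q).coeff i.rev
  have h1 := mul_left_cancel₀ hfac h0
  convert hnonneg using 1
  simp only [dotProduct, mulVec, of_apply, star_trivial, Finset.mul_sum, Pi.star_apply]
  trans ∑ i, ∑ j, v i * v j * L i j
  · exact Finset.sum_congr rfl fun i _ => Finset.sum_congr rfl fun j _ => by ring
  · rw [← h1]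
    exact Finset.sum_congr rfl fun i _ => Finset.sum_congr rfl fun j _ => by ring

/-- A family of `n` points of an infinite set factors through an injective one. -/
theorem exists_injective_comp_eq {α : Type*} {s : Set α} (hs : s.Infinite) {n : ℕ}
    {x : Fin n → α} (hx : ∀ i, x i ∈ s) :
    ∃ (y : Fin n → α) (σ : Fin n → Fin n),
      (∀ i, y i ∈ s) ∧ Function.Injective y ∧ x = y ∘ σ := by
  obtain ⟨t, hxt, hts, ht⟩ := hs.exists_superset_ncard_eq (range_subset_iff.2 hx)
    (finite_range x) (k := n) (by
      simpa [Nat.card_coe_set_eq] using Finite.card_range_le x)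
  rcases Nat.eq_zero_or_pos n with rfl | hn
  · exact ⟨x, id, hx, Function.injective_of_subsingleton x, rfl⟩
  have : Finite t := finite_of_ncard_pos (by omega)
  let e : t ≃ Fin n := Finite.equivFinOfCardEq ht
  refine ⟨fun i => e.symm i, fun i => e ⟨x i, hxt (mem_range_self i)⟩, fun i => hts (e.symm i).2,
    Subtype.val_injective.comp e.symm.injective, ?_⟩
  ext i
  simp

/-- If the Hankel matrix `M_n(t,f)` is positive semi-definite for all `t ∈ (a,b)`, then every
`n×n` Loewner matrix of `f` over `(a,b)` is positive semi-definite. -/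
theorem stmt10 (n : ℕ) (hn : 2 ≤ n) (a b : ℝ) (f : ℝ → ℝ)
    (hf : ContDiffOn ℝ (2 * n - 1 : ℕ) f (Ioo a b))
    (hM : ∀ t ∈ Ioo a b,
      (Matrix.of fun i j : Fin n =>
        iteratedDerivWithin (i.val + j.val + 1) f (Ioo a b) t /
          (Nat.factorial (i.val + j.val + 1) : ℝ)).PosSemidef) :
    ∀ lam : Fin n → ℝ, (∀ i, lam i ∈ Ioo a b) →
      (Matrix.of fun i j : Fin n =>
        if lam i = lam j then derivWithin f (Ioo a b) (lam i)
        else (f (lam i) - f (lam j)) / (lam i - lam j)).PosSemidef := by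
  intro lam hlam
  have hab : a < b := (hlam ⟨0, by omega⟩).1.trans (hlam ⟨0, by omega⟩).2
  obtain ⟨μ, σ, hμ, hinj, rfl⟩ := exists_injective_comp_eq (Ioo_infinite hab) hlam
  have h := (posSemidef_loewner_of_injective (by omega) hf (fun t ht => by
    simpa only [iteratedDerivWithin_of_isOpen isOpen_Ioo ht] using hM t ht) hμ hinj).submatrix σ
  convert h using 1
  ext i j
  simp [derivWithin_of_isOpen isOpen_Ioo (hμ (σ i))]
end

section
/- Let n ≥ 2 and f ∈ C^{2n−1}(a,b). If the Hankel matrix M_n(t,f) = (f^{(i+j−1)}(t)/(i+j−1)!)_{ij} is positive semi-definite for every t ∈ (a,b), then f is matrix monotone of order n on (a,b): for all n×n Hermitian matrices A ≤ B with spectra in (a,b), f(A) ≤ f(B). -/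
open Set Matrix
open scoped ComplexOrder

theorem contDiff_polynomial_eval (P : Polynomial ℝ) {m : WithTop ℕ∞} :
    ContDiff ℝ m fun x => P.eval x := by
  simpa using P.contDiff_aeval (𝕜 := ℝ) m

open Polynomial in
theorem iteratedDerivWithin_polynomial_eval (P : ℝ[X]) (k : ℕ) {s : Set ℝ}
    (hs : UniqueDiffOn ℝ s) {t : ℝ} (ht : t ∈ s) :
    iteratedDerivWithin k (fun x => P.eval x) s t = (derivative^[k] P).eval t := by
  induction k generalizing t with
  | zero => simp
  | succ k ih =>
    rw [iteratedDerivWithin_succ, derivWithin_congr (fun x hx => ih hx) (ih ht),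
      (derivative^[k] P).derivWithin (hs t ht), Function.iterate_succ_apply']

open Polynomial in
theorem eval_iterate_derivative_eq_taylor_coeff (P : ℝ[X]) (k : ℕ) (t : ℝ) :
    (derivative^[k] P).eval t = (k.factorial : ℝ) * (taylor t P).coeff k := by
  rw [taylor_coeff, ← factorial_smul_hasseDeriv]
  simp

theorem exists_iteratedDerivWithin_eq_zero {a b : ℝ} (m : ℕ) (h : ℝ → ℝ)
    (hh : ContDiffOn ℝ m h (Ioo a b)) (x : Fin (m + 1) → ℝ) (hx : StrictMono x)
    (hxab : ∀ i, x i ∈ Ioo a b) (h0 : ∀ i, h (x i) = 0) :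
    ∃ ξ ∈ Ioo a b, iteratedDerivWithin m h (Ioo a b) ξ = 0 := by
  induction m generalizing h with
  | zero => exact ⟨x 0, hxab 0, by simpa using h0 0⟩
  | succ m ih =>
    have hIcc (i : Fin (m + 1)) : Icc (x i.castSucc) (x i.succ) ⊆ Ioo a b := fun y hy =>
      ⟨(hxab i.castSucc).1.trans_le hy.1, hy.2.trans_lt (hxab i.succ).2⟩
    have rolle (i : Fin (m + 1)) :
        ∃ c ∈ Ioo (x i.castSucc) (x i.succ), deriv h c = 0 :=
      exists_deriv_eq_zero (hx i.castSucc_lt_succ) (hh.continuousOn.mono (hIcc i))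
        (by rw [h0, h0])
    choose c hc hc0 using rolle
    have hcab (i : Fin (m + 1)) : c i ∈ Ioo a b := hIcc i (Ioo_subset_Icc_self (hc i))
    rw [iteratedDerivWithin_succ']
    refine ih (derivWithin h (Ioo a b)) (hh.derivWithin (uniqueDiffOn_Ioo a b) (by norm_cast)) c
      ?_ hcab ?_
    · intro i j hij
      have h1 : x i.succ ≤ x j.castSucc := hx.monotone (by simpa [Fin.le_def] using hij)
      exact (hc i).2.trans_le (h1.trans (hc j).1.le)
    · intro i
      rw [derivWithin_of_isOpen isOpen_Ioo (hcab i), hc0]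

open Polynomial in
/-- Mean value theorem for divided differences. -/
theorem exists_dividedDifference_eq {ι : Type*} [Fintype ι] [DecidableEq ι] {a b : ℝ} (m : ℕ)
    (hm : Fintype.card ι = m + 1) (g : ℝ → ℝ) (hg : ContDiffOn ℝ m g (Ioo a b)) (x : ι → ℝ)
    (hx : Function.Injective x) (hxab : ∀ i, x i ∈ Ioo a b) :
    ∃ ξ ∈ Ioo a b, ∑ i, g (x i) / ∏ j ∈ Finset.univ.erase i, (x i - x j) =
      iteratedDerivWithin m g (Ioo a b) ξ / m.factorial := by
  let P : ℝ[X] := Lagrange.interpolate Finset.univ x (fun i => g (x i))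
  have hdeg : P.degree < (Finset.univ : Finset ι).card :=
    Lagrange.degree_interpolate_lt _ hx.injOn
  have heval (i : ι) : P.eval (x i) = g (x i) :=
    Lagrange.eval_interpolate_at_node _ hx.injOn (Finset.mem_univ i)
  have hcoeff := Lagrange.coeff_eq_sum hx.injOn hdeg
  simp only [heval, Finset.card_univ, hm, Nat.add_sub_cancel] at hcoeff
  have hPc : ContDiffOn ℝ m (fun y => P.eval y) (Ioo a b) := (contDiff_polynomial_eval P).contDiffOn
  let e := (Finset.univ.image x).orderIsoOfFin
    (by rw [Finset.card_image_of_injective _ hx, Finset.card_univ, hm])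
  have he (k : Fin (m + 1)) : ∃ i, x i = e k := by
    simpa only [Finset.mem_image, Finset.mem_univ, true_and] using (e k).2
  obtain ⟨ξ, hξ, hξ0⟩ := exists_iteratedDerivWithin_eq_zero m (g - fun y => P.eval y)
    (hg.sub hPc) (fun k => e k) (fun i j hij => e.strictMono hij)
    (fun k => by obtain ⟨i, hi⟩ := he k; rw [← hi]; exact hxab i)
    (fun k => by obtain ⟨i, hi⟩ := he k; simp [← hi, heval])
  refine ⟨ξ, hξ, ?_⟩
  rw [iteratedDerivWithin_sub hξ (uniqueDiffOn_Ioo a b) (hg ξ hξ) (hPc ξ hξ),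
    iteratedDerivWithin_polynomial_eval _ _ (uniqueDiffOn_Ioo a b) hξ,
    eval_iterate_derivative_eq_taylor_coeff, sub_eq_zero] at hξ0
  have hnat : P.natDegree ≤ m := by
    rw [Finset.card_univ, hm] at hdeg
    exact natDegree_le_iff_coeff_eq_zero.mpr fun N hN =>
      coeff_eq_zero_of_degree_lt (hdeg.trans_le (by exact_mod_cast hN))
  have htop : (taylor ξ P).coeff m = P.coeff m := by
    rcases hnat.lt_or_eq with h | h
    · rw [coeff_eq_zero_of_natDegree_lt h, coeff_eq_zero_of_natDegree_lt (by simpa using h)]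
    · rw [← h, coeff_natDegree, ← natDegree_taylor P ξ, coeff_natDegree, leadingCoeff_taylor]
  rw [hξ0, htop, hcoeff]
  field_simp

theorem sum_range_mul_antidiagonal_eq {n : ℕ} {c : ℕ → ℝ} (hc : ∀ k, n ≤ k → c k = 0)
    (F : ℕ → ℝ) :
    ∑ k ∈ Finset.range (2 * n), F k *
        ∑ p ∈ Finset.HasAntidiagonal.antidiagonal (2 * n - 1 - k), c p.1 * c p.2 =
      ∑ i : Fin n, ∑ j : Fin n, c (n - 1 - i) * (F (i + j + 1) * c (n - 1 - j)) := by
  have hR : ∑ i : Fin n, ∑ j : Fin n, c (n - 1 - i) * (F (i + j + 1) * c (n - 1 - j)) =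
      ∑ p ∈ Finset.range n ×ˢ Finset.range n, F (2 * n - 1 - (p.1 + p.2)) * (c p.1 * c p.2) := by
    rw [Finset.sum_product, ← Finset.sum_range_reflect]
    simp_rw [← Finset.sum_range_reflect (fun j => F (_ - (_ + j)) * (c _ * c j))]
    rw [Finset.sum_range]
    refine Finset.sum_congr rfl fun i _ => ?_
    rw [Finset.sum_range]
    refine Finset.sum_congr rfl fun j _ => ?_
    rw [show 2 * n - 1 - (n - 1 - (i : ℕ) + (n - 1 - (j : ℕ))) = i + j + 1 by lia]
    ring
  rw [hR, ← Finset.sum_range_reflect,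
    ← Finset.sum_fiberwise_of_maps_to (g := fun p : ℕ × ℕ => p.1 + p.2)
      (t := Finset.range (2 * n)) (by intro p hp; simp at hp ⊢; lia)]
  refine Finset.sum_congr rfl fun l hl => ?_
  rw [Finset.mem_range] at hl
  rw [show 2 * n - 1 - (2 * n - 1 - l) = l by lia, Finset.mul_sum]
  symm
  refine Finset.sum_subset_zero_on_sdiff (fun p hp => ?_) (fun p hp => ?_) (fun p hp => ?_)
  · simpa using (Finset.mem_filter.mp hp).2
  · simp only [Finset.mem_sdiff, Finset.mem_filter, Finset.mem_product,
      Finset.mem_range] at hp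
    have : n ≤ p.1 ∨ n ≤ p.2 := by
      by_contra! hlt
      exact hp.2 ⟨hlt, Finset.HasAntidiagonal.mem_antidiagonal.mp hp.1⟩
    rcases this with h | h <;> simp [hc _ h]
  · rw [(Finset.mem_filter.mp hp).2]

open Polynomial in
theorem iteratedDerivWithin_mul_sq_nonneg {n : ℕ} (hn : 1 ≤ n) {a b : ℝ} {f : ℝ → ℝ}
    (hf : ContDiffOn ℝ (2 * n - 1 : ℕ) f (Ioo a b)) {t : ℝ} (ht : t ∈ Ioo a b)
    (hM : (Matrix.of fun i j : Fin n =>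
        iteratedDerivWithin (i.val + j.val + 1) f (Ioo a b) t /
          (Nat.factorial (i.val + j.val + 1) : ℝ)).PosSemidef)
    (q : ℝ[X]) (hq : q.degree < n) :
    0 ≤ iteratedDerivWithin (2 * n - 1) (f * fun x => (q ^ 2).eval x) (Ioo a b) t := by
  have hu := uniqueDiffOn_Ioo a b
  rw [iteratedDerivWithin_mul ht hu (hf t ht) (contDiff_polynomial_eval (q ^ 2)).contDiffWithinAt]
  simp_rw [iteratedDerivWithin_polynomial_eval _ _ hu ht, eval_iterate_derivative_eq_taylor_coeff]
  set F : ℕ → ℝ := fun k => iteratedDerivWithin k f (Ioo a b) t / k.factorial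
  set c := (taylor t q).coeff
  have hc (k : ℕ) (hk : n ≤ k) : c k = 0 :=
    coeff_eq_zero_of_degree_lt (by rw [degree_taylor]; exact hq.trans_le (by exact_mod_cast hk))
  have key := hM.dotProduct_mulVec_nonneg (fun i : Fin n => c (n - 1 - i))
  have h4 : 0 ≤ ((2 * n - 1).factorial : ℝ) * ∑ k ∈ Finset.range (2 * n), F k *
      ∑ p ∈ Finset.HasAntidiagonal.antidiagonal (2 * n - 1 - k), c p.1 * c p.2 := by
    rw [sum_range_mul_antidiagonal_eq hc]
    refine mul_nonneg (by positivity) ?_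
    simpa [dotProduct, mulVec, Finset.mul_sum, mul_assoc] using key
  convert h4 using 1
  rw [Finset.mul_sum, Nat.sub_add_cancel (by lia)]
  refine Finset.sum_congr rfl fun k hk => ?_
  rw [taylor_pow, pow_two, coeff_mul]
  have := Nat.choose_mul_factorial_mul_factorial (show k ≤ 2 * n - 1 by grind)
  rw [← this]
  simp only [F, c]
  push_cast
  field_simp

theorem sum_dividedDifference_mul_sq_nonneg {ι : Type*} [Fintype ι] [DecidableEq ι] {n : ℕ}
    (hn : 1 ≤ n) {a b : ℝ} {f : ℝ → ℝ}
    (hf : ContDiffOn ℝ (2 * n - 1 : ℕ) f (Ioo a b))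
    (hM : ∀ t ∈ Ioo a b, (Matrix.of fun i j : Fin n =>
        iteratedDerivWithin (i.val + j.val + 1) f (Ioo a b) t /
          (Nat.factorial (i.val + j.val + 1) : ℝ)).PosSemidef)
    (hι : Fintype.card ι = 2 * n) (x : ι → ℝ) (hx : Function.Injective x)
    (hxab : ∀ i, x i ∈ Ioo a b) (q : Polynomial ℝ) (hq : q.degree < n) :
    0 ≤ ∑ i, f (x i) * q.eval (x i) ^ 2 / ∏ j ∈ Finset.univ.erase i, (x i - x j) := by
  obtain ⟨ξ, hξ, h⟩ := exists_dividedDifference_eq (2 * n - 1) (by lia)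
    (f * fun y => (q ^ 2).eval y) (hf.mul (contDiff_polynomial_eval (q ^ 2)).contDiffOn) x hx hxab
  simp only [Pi.mul_apply, Polynomial.eval_pow] at h
  rw [h]
  have := iteratedDerivWithin_mul_sq_nonneg hn hf hξ (hM ξ hξ) q hq
  simp only [Polynomial.eval_pow] at this
  positivity

theorem degree_sum_C_mul_nodal_erase_lt {ι : Type*} [Fintype ι] [DecidableEq ι] (c l : ι → ℝ) :
    (∑ i, Polynomial.C (c i) * Lagrange.nodal (Finset.univ.erase i) l).degree <
      (Fintype.card ι : WithBot ℕ) := by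
  refine (Polynomial.degree_sum_le _ _).trans_lt
    ((Finset.sup_lt_iff (WithBot.bot_lt_coe _)).mpr fun k _ => ?_)
  rw [← Polynomial.smul_eq_C_mul]
  refine (Polynomial.degree_smul_le _ _).trans_lt ?_
  rw [Lagrange.degree_nodal]
  exact_mod_cast Finset.card_erase_lt_of_mem (Finset.mem_univ k)

theorem prod_sub_eq_of_sum_div_eq_one {ι : Type*} [Fintype ι] [DecidableEq ι] {l m c : ι → ℝ}
    (hm : Function.Injective m) (hlm : ∀ i j, m j ≠ l i)
    (h : ∀ j, ∑ i, c i / (m j - l i) = 1) (i : ι) :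
    ∏ j, (l i - m j) = -c i * ∏ k ∈ Finset.univ.erase i, (l i - l k) := by
  let R : Polynomial ℝ := ∑ i, Polynomial.C (c i) * Lagrange.nodal (Finset.univ.erase i) l
  have hR : R.degree < (Finset.univ : Finset ι).card := degree_sum_C_mul_nodal_erase_lt c l
  have hA : (Lagrange.nodal Finset.univ l).degree = (Finset.univ : Finset ι).card :=
    Lagrange.degree_nodal
  have hAR : (Lagrange.nodal Finset.univ l - R).degree = (Finset.univ : Finset ι).card := by
    rw [Polynomial.degree_sub_eq_left_of_degree_lt (by rwa [hA]), hA]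
  have hpoly : Lagrange.nodal Finset.univ l - R = Lagrange.nodal Finset.univ m := by
    refine Polynomial.eq_of_degree_le_of_eval_index_eq (s := Finset.univ) (v := m) hm.injOn hAR.le
      (by rw [hAR, Lagrange.degree_nodal]) ?_ fun j _ => ?_
    · rw [Polynomial.leadingCoeff_sub_of_degree_lt (by rwa [hA]),
        Lagrange.nodal_monic.leadingCoeff, Lagrange.nodal_monic.leadingCoeff]
    · have hterm (k : ι) : c k * ∏ x ∈ Finset.univ.erase k, (m j - l x) =
          (∏ x, (m j - l x)) * (c k / (m j - l k)) := by
        rw [← Finset.mul_prod_erase _ _ (Finset.mem_univ k)]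
        field_simp [sub_ne_zero.mpr (hlm k j)]
      simp only [R, Polynomial.eval_sub, Polynomial.eval_finsetSum, Polynomial.eval_mul,
        Polynomial.eval_C, Lagrange.eval_nodal, hterm]
      rw [← Finset.mul_sum, h j,
        Finset.prod_eq_zero (f := fun k => m j - m k) (Finset.mem_univ j) (sub_self _)]
      ring
  have := congrArg (Polynomial.eval (l i)) hpoly
  simp only [R, Polynomial.eval_sub, Polynomial.eval_finsetSum, Polynomial.eval_mul,
    Polynomial.eval_C, Lagrange.eval_nodal] at this
  rw [Finset.prod_eq_zero (i := i) (Finset.mem_univ i) (sub_self _),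
    Finset.sum_eq_single i] at this
  · linarith
  · intro k _ hk
    rw [Finset.prod_eq_zero (i := i) (by simp [Ne.symm hk]) (sub_self _), mul_zero]
  · simp

theorem prod_erase_inl {ι : Type*} [Fintype ι] [DecidableEq ι] (g : ι ⊕ ι → ℝ) (i : ι) :
    ∏ x ∈ Finset.univ.erase (Sum.inl i), g x =
      (∏ k ∈ Finset.univ.erase i, g (Sum.inl k)) * ∏ k, g (Sum.inr k) := by
  have : (Finset.univ.erase (Sum.inl i) : Finset (ι ⊕ ι)) =
      (Finset.univ.erase i).disjSum Finset.univ := by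
    ext (x | x) <;> simp
  rw [this, Finset.prod_disjSum]

theorem prod_erase_inr {ι : Type*} [Fintype ι] [DecidableEq ι] (g : ι ⊕ ι → ℝ) (i : ι) :
    ∏ x ∈ Finset.univ.erase (Sum.inr i), g x =
      (∏ k, g (Sum.inl k)) * ∏ k ∈ Finset.univ.erase i, g (Sum.inr k) := by
  have : (Finset.univ.erase (Sum.inr i) : Finset (ι ⊕ ι)) =
      (Finset.univ : Finset ι).disjSum (Finset.univ.erase i) := by
    ext (x | x) <;> simp
  rw [this, Finset.prod_disjSum]

/-- The residue identity behind a rank one perturbation: `l` and `m` are the eigenvalues of the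
unperturbed and the perturbed matrix, `Q` the change of eigenbasis, `p` and `d` the coordinates of
the perturbing vector and `u` and `v` those of the test vector. -/
theorem sum_mul_normSq_sub_nonneg {n : ℕ}
    (hn : 1 ≤ n) {a b : ℝ} {f : ℝ → ℝ}
    (hf : ContDiffOn ℝ (2 * n - 1 : ℕ) f (Ioo a b))
    (hM : ∀ t ∈ Ioo a b, (Matrix.of fun i j : Fin n =>
        iteratedDerivWithin (i.val + j.val + 1) f (Ioo a b) t /
          (Nat.factorial (i.val + j.val + 1) : ℝ)).PosSemidef)
    {l m : Fin n → ℝ} {p d u v : Fin n → ℂ} {Q : Matrix (Fin n) (Fin n) ℂ}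
    (hl : Function.Injective l) (hm : Function.Injective m)
    (hlab : ∀ i, l i ∈ Ioo a b) (hmab : ∀ i, m i ∈ Ioo a b)
    (hp : ∀ i, p i ≠ 0) (hd : ∀ j, d j ≠ 0)
    (hQ : ∀ i j, ((m j : ℂ) - l i) * Q i j = p i * star (d j))
    (hdQ : d = Qᴴ *ᵥ p) (hpQ : p = Q *ᵥ d) (hvQ : v = Qᴴ *ᵥ u) :
    0 ≤ ∑ j, f (m j) * Complex.normSq (v j) - ∑ i, f (l i) * Complex.normSq (u i) := by
  have hlm (i j : Fin n) : m j ≠ l i := by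
    intro h
    have := hQ i j
    rw [h, sub_self, zero_mul] at this
    exact mul_ne_zero (hp i) (star_ne_zero.mpr (hd j)) this.symm
  have hlmC (i j : Fin n) : (m j : ℂ) - l i ≠ 0 :=
    sub_ne_zero.mpr (Complex.ofReal_injective.ne (hlm i j))
  have hQ' (i j : Fin n) : Q i j = p i * star (d j) / (m j - l i) := by
    rw [eq_div_iff (hlmC i j), mul_comm, hQ]
  have hQs (i j : Fin n) : star (Q i j) = star (p i) * d j / (m j - l i) := by
    rw [hQ']; simp
  have hpsum (j : Fin n) : ∑ i, Complex.normSq (p i) / (m j - l i) = 1 := by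
    have h1 := congrFun hdQ j
    simp only [mulVec, dotProduct, conjTranspose_apply, hQs] at h1
    have h2 : d j * ∑ i, (Complex.normSq (p i) : ℂ) / (m j - l i) = d j * 1 := by
      rw [mul_one, Finset.mul_sum]
      conv_rhs => rw [h1]
      refine Finset.sum_congr rfl fun i _ => ?_
      rw [← Complex.mul_conj]
      simp only [Complex.star_def]
      ring
    have h3 := mul_left_cancel₀ (hd j) h2
    exact_mod_cast h3
  have hdsum (i : Fin n) : ∑ j, -Complex.normSq (d j) / (l i - m j) = 1 := by
    have h1 := congrFun hpQ i
    simp only [mulVec, dotProduct, hQ'] at h1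
    have h2 : p i * ∑ j, -(Complex.normSq (d j) : ℂ) / (l i - m j) = p i * 1 := by
      rw [mul_one, Finset.mul_sum]
      conv_rhs => rw [h1]
      refine Finset.sum_congr rfl fun j _ => ?_
      rw [← Complex.mul_conj, ← neg_sub (m j : ℂ) (l i), neg_div_neg_eq]
      simp only [Complex.star_def]
      ring
    have h3 := mul_left_cancel₀ (hp i) h2
    exact_mod_cast h3
  have hB := prod_sub_eq_of_sum_div_eq_one hm hlm hpsum
  have hA := prod_sub_eq_of_sum_div_eq_one hl (fun i j => (hlm j i).symm) hdsum
  have hl0 (i : Fin n) : ∏ k ∈ Finset.univ.erase i, (l i - l k) ≠ 0 :=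
    Finset.prod_ne_zero_iff.mpr fun k hk => sub_ne_zero.mpr (hl.ne (Finset.ne_of_mem_erase hk).symm)
  have hm0 (i : Fin n) : ∏ k ∈ Finset.univ.erase i, (m i - m k) ≠ 0 :=
    Finset.prod_ne_zero_iff.mpr fun k hk => sub_ne_zero.mpr (hm.ne (Finset.ne_of_mem_erase hk).symm)
  let w : Fin n → ℂ := fun i => u i * star (p i)
  let N (φ : ℂ → ℝ) : Polynomial ℝ :=
    ∑ i, Polynomial.C (φ (w i)) * Lagrange.nodal (Finset.univ.erase i) l
  have hNdeg (φ : ℂ → ℝ) : (N φ).degree < n := by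
    simpa using degree_sum_C_mul_nodal_erase_lt (fun i => φ (w i)) l
  have hNsq (x : ℝ) : (N Complex.re).eval x ^ 2 + (N Complex.im).eval x ^ 2 =
      Complex.normSq (∑ i, w i * ((∏ k ∈ Finset.univ.erase i, (x - l k) : ℝ) : ℂ)) := by
    rw [Complex.normSq_apply]
    simp only [N, Polynomial.eval_finsetSum, Polynomial.eval_mul, Polynomial.eval_C,
      Lagrange.eval_nodal, Complex.re_sum, Complex.im_sum, Complex.re_mul_ofReal,
      Complex.im_mul_ofReal]
    ring
  have hNl (i : Fin n) : (N Complex.re).eval (l i) ^ 2 + (N Complex.im).eval (l i) ^ 2 =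
      Complex.normSq (u i) * Complex.normSq (p i) *
        (∏ k ∈ Finset.univ.erase i, (l i - l k)) ^ 2 := by
    rw [hNsq, Finset.sum_eq_single i]
    · simp only [w, Complex.normSq_mul, Complex.star_def, Complex.normSq_conj,
        Complex.normSq_ofReal]
      ring
    · intro k _ hk
      rw [Finset.prod_eq_zero (i := i) (by simp [Ne.symm hk]) (sub_self _)]
      simp
    · simp
  have hNm (j : Fin n) : (N Complex.re).eval (m j) ^ 2 + (N Complex.im).eval (m j) ^ 2 =
      (∏ k, (m j - l k)) ^ 2 * Complex.normSq (v j) / Complex.normSq (d j) := by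
    have h1 := congrFun hvQ j
    simp only [mulVec, dotProduct, conjTranspose_apply, hQs] at h1
    have h2 : ∑ i, w i * ((∏ k ∈ Finset.univ.erase i, (m j - l k) : ℝ) : ℂ) =
        ((∏ k, (m j - l k) : ℝ) : ℂ) * v j / d j := by
      rw [h1, Finset.mul_sum, Finset.sum_div]
      refine Finset.sum_congr rfl fun i _ => ?_
      rw [← Finset.mul_prod_erase _ _ (Finset.mem_univ i)]
      push_cast
      field_simp [hd j, hlmC i j]
      simp only [w]
      ring
    rw [hNsq, h2]
    simp only [Complex.normSq_mul, Complex.normSq_div, Complex.normSq_ofReal]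
    ring
  have hinj : Function.Injective (Sum.elim l m) :=
    hl.sumElim hm fun i j => (hlm i j).symm
  have hab (x : Fin n ⊕ Fin n) : Sum.elim l m x ∈ Ioo a b := by
    rcases x with i | j
    exacts [hlab i, hmab j]
  have hre := sum_dividedDifference_mul_sq_nonneg hn hf hM (by simp; ring) _ hinj hab _
    (hNdeg Complex.re)
  have him := sum_dividedDifference_mul_sq_nonneg hn hf hM (by simp; ring) _ hinj hab _
    (hNdeg Complex.im)
  have hsum := add_nonneg hre him
  rw [← Finset.sum_add_distrib] at hsum
  simp only [← add_div, ← mul_add, Fintype.sum_sum_type, prod_erase_inl, prod_erase_inr,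
    Sum.elim_inl, Sum.elim_inr, hNl, hNm, hB] at hsum
  refine hsum.trans_eq ?_
  symm
  rw [sub_eq_neg_add, ← Finset.sum_neg_distrib]
  congr 1
  · refine Finset.sum_congr rfl fun i _ => ?_
    have := hl0 i
    have := Complex.normSq_pos.mpr (hp i)
    field_simp
  · refine Finset.sum_congr rfl fun j _ => ?_
    have := hm0 j
    have := Complex.normSq_pos.mpr (hd j)
    rw [hA j]
    field_simp

theorem Matrix.IsHermitian.cfc_eq_mul {n : ℕ} {A : Matrix (Fin n) (Fin n) ℂ} (hA : A.IsHermitian)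
    (f : ℝ → ℝ) :
    hA.cfc f = (hA.eigenvectorUnitary : Matrix (Fin n) (Fin n) ℂ) *
      diagonal (fun i => (f (hA.eigenvalues i) : ℂ)) *
        (hA.eigenvectorUnitary : Matrix (Fin n) (Fin n) ℂ)ᴴ := by
  rw [Matrix.IsHermitian.cfc, Unitary.conjStarAlgAut_apply]
  rfl

theorem Matrix.IsHermitian.dotProduct_cfc_mulVec {n : ℕ} {A : Matrix (Fin n) (Fin n) ℂ}
    (hA : A.IsHermitian) (f : ℝ → ℝ) (w : Fin n → ℂ) :
    star w ⬝ᵥ (hA.cfc f *ᵥ w) = ((∑ i, f (hA.eigenvalues i) *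
      Complex.normSq (((hA.eigenvectorUnitary : Matrix (Fin n) (Fin n) ℂ)ᴴ *ᵥ w) i) : ℝ) : ℂ) := by
  set U := (hA.eigenvectorUnitary : Matrix (Fin n) (Fin n) ℂ) with hU
  rw [hA.cfc_eq_mul, ← hU, ← mulVec_mulVec, ← mulVec_mulVec, dotProduct_mulVec,
    ← conjTranspose_conjTranspose U, ← star_mulVec, conjTranspose_conjTranspose]
  simp only [dotProduct, mulVec_diagonal, Pi.star_apply]
  push_cast
  refine Finset.sum_congr rfl fun i _ => ?_
  rw [← Complex.mul_conj, Complex.star_def]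
  ring

theorem Matrix.IsHermitian.mul_eigenvectorUnitary {n : ℕ} {A : Matrix (Fin n) (Fin n) ℂ}
    (hA : A.IsHermitian) :
    A * (hA.eigenvectorUnitary : Matrix (Fin n) (Fin n) ℂ) =
      (hA.eigenvectorUnitary : Matrix (Fin n) (Fin n) ℂ) *
        diagonal (fun i => (hA.eigenvalues i : ℂ)) := by
  have h := hA.spectral_theorem
  rw [Unitary.conjStarAlgAut_apply] at h
  refine (congrArg (· * (hA.eigenvectorUnitary : Matrix (Fin n) (Fin n) ℂ)) h).trans ?_
  simp only [mul_assoc, Unitary.coe_star_mul_self, mul_one]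
  rfl

/-- No eigenvector of `A` is orthogonal to `x`; for Hermitian `A` this says that `x` is a cyclic
vector. -/
def IsCyclicVector {n : ℕ} (A : Matrix (Fin n) (Fin n) ℂ) (x : Fin n → ℂ) : Prop :=
  ∀ (y : Fin n → ℂ) (c : ℂ), A *ᵥ y = c • y → star x ⬝ᵥ y = 0 → y = 0

theorem IsCyclicVector.add_vecMulVec {n : ℕ} {A : Matrix (Fin n) (Fin n) ℂ} {x : Fin n → ℂ}
    (h : IsCyclicVector A x) : IsCyclicVector (A + vecMulVec x (star x)) x := by
  intro y c hy hxy
  refine h y c ?_ hxy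
  rw [← hy, add_mulVec, vecMulVec_mulVec, hxy]
  simp

theorem IsCyclicVector.of_diagonalization {n : ℕ} {A U : Matrix (Fin n) (Fin n) ℂ}
    {x l : Fin n → ℂ} (hAU : A * U = U * diagonal l) (hUl : Uᴴ * U = 1) (hUr : U * Uᴴ = 1)
    (hl : Function.Injective l) (hx : ∀ i, (Uᴴ *ᵥ x) i ≠ 0) : IsCyclicVector A x := by
  intro y c hy hxy
  have hyU : y = U *ᵥ (Uᴴ *ᵥ y) := by rw [mulVec_mulVec, hUr, one_mulVec]
  have hUA : Uᴴ * A = diagonal l * Uᴴ := by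
    calc Uᴴ * A = Uᴴ * (A * U) * Uᴴ := by rw [mul_assoc, mul_assoc, hUr, mul_one]
      _ = diagonal l * Uᴴ := by rw [hAU, ← mul_assoc, hUl, one_mul]
  have hz (i : Fin n) : l i * (Uᴴ *ᵥ y) i = c * (Uᴴ *ᵥ y) i := by
    have : (Uᴴ *ᵥ (A *ᵥ y)) i = (Uᴴ *ᵥ (c • y)) i := by rw [hy]
    rwa [mulVec_mulVec, hUA, ← mulVec_mulVec, mulVec_diagonal, mulVec_smul] at this
  have hpz : star (Uᴴ *ᵥ x) ⬝ᵥ (Uᴴ *ᵥ y) = 0 := by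
    rw [star_mulVec, conjTranspose_conjTranspose, ← dotProduct_mulVec, ← hyU, hxy]
  have hz0 : Uᴴ *ᵥ y = 0 := by
    by_contra hne
    obtain ⟨i, hi⟩ := Function.ne_iff.mp hne
    have hother (k : Fin n) (hk : k ≠ i) : (Uᴴ *ᵥ y) k = 0 := by
      by_contra hk0
      exact hk (hl ((mul_right_cancel₀ hk0 (hz k)).trans (mul_right_cancel₀ hi (hz i)).symm))
    rw [dotProduct, Finset.sum_eq_single i (fun k _ hk => by rw [hother k hk, mul_zero])
      (by simp)] at hpz
    exact mul_ne_zero (star_ne_zero.mpr (hx i)) hi hpz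
  rw [hyU, hz0, mulVec_zero]

theorem IsCyclicVector.ne_zero_and_injective {n : ℕ} {A : Matrix (Fin n) (Fin n) ℂ}
    {x : Fin n → ℂ} (h : IsCyclicVector A x) (hA : A.IsHermitian) :
    (∀ i, ((hA.eigenvectorUnitary : Matrix (Fin n) (Fin n) ℂ)ᴴ *ᵥ x) i ≠ 0) ∧
      Function.Injective hA.eigenvalues := by
  set U := (hA.eigenvectorUnitary : Matrix (Fin n) (Fin n) ℂ) with hU
  have hUl : Uᴴ * U = 1 := Unitary.coe_star_mul_self hA.eigenvectorUnitary
  have key (z : Fin n → ℂ) (c : ℂ) (hz : ∀ i, (hA.eigenvalues i : ℂ) * z i = c * z i)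
      (hpz : star (Uᴴ *ᵥ x) ⬝ᵥ z = 0) : z = 0 := by
    have h0 : U *ᵥ z = 0 := by
      refine h _ c ?_ ?_
      · rw [mulVec_mulVec, hA.mul_eigenvectorUnitary, ← mulVec_mulVec, ← mulVec_smul]
        congr 1
        ext i
        simp [mulVec_diagonal, hz i]
      · rwa [star_mulVec, conjTranspose_conjTranspose, ← dotProduct_mulVec] at hpz
    rw [← one_mulVec z, ← hUl, ← mulVec_mulVec, h0, mulVec_zero]
  have hp (i : Fin n) : (Uᴴ *ᵥ x) i ≠ 0 := by
    intro hi
    have := key (Pi.single i 1) (hA.eigenvalues i)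
      (fun k => by by_cases hk : k = i <;> simp [hk]) (by simp [hi])
    simpa using congrFun this i
  refine ⟨hp, fun i j hij => ?_⟩
  by_contra hne
  have := key (Pi.single i (star ((Uᴴ *ᵥ x) j)) - Pi.single j (star ((Uᴴ *ᵥ x) i)))
    (hA.eigenvalues i)
    (fun k => by
      by_cases hk : k = i
      · simp [hk]
      · by_cases hk' : k = j
        · simp [hk', hij]
        · simp [hk, hk'])
    (by simp [dotProduct_sub, mul_comm])
  have := congrFun this i
  simp [hne] at this
  exact hp j this

theorem posSemidef_cfc_add_vecMulVec_sub_of_isCyclicVector {n : ℕ}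
    (hn : 1 ≤ n) {a b : ℝ} {f : ℝ → ℝ}
    (hf : ContDiffOn ℝ (2 * n - 1 : ℕ) f (Ioo a b))
    (hM : ∀ t ∈ Ioo a b, (Matrix.of fun i j : Fin n =>
        iteratedDerivWithin (i.val + j.val + 1) f (Ioo a b) t /
          (Nat.factorial (i.val + j.val + 1) : ℝ)).PosSemidef)
    {A B : Matrix (Fin n) (Fin n) ℂ} {x : Fin n → ℂ} (hx : IsCyclicVector A x)
    (hBA : B = A + vecMulVec x (star x)) (hA : A.IsHermitian) (hB : B.IsHermitian)
    (hAab : ∀ i, hA.eigenvalues i ∈ Ioo a b) (hBab : ∀ i, hB.eigenvalues i ∈ Ioo a b) :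
    (hB.cfc f - hA.cfc f).PosSemidef := by
  have hxB : IsCyclicVector B x := hBA ▸ hx.add_vecMulVec
  obtain ⟨hp, hl⟩ := hx.ne_zero_and_injective hA
  obtain ⟨hd, hm⟩ := hxB.ne_zero_and_injective hB
  have hcfc {C : Matrix (Fin n) (Fin n) ℂ} (hC : C.IsHermitian) : (hC.cfc f).IsHermitian := by
    rw [← hC.cfc_eq]
    exact cfc_predicate f C
  refine .of_dotProduct_mulVec_nonneg ((hcfc hB).sub (hcfc hA)) fun w => ?_
  rw [sub_mulVec, dotProduct_sub, hB.dotProduct_cfc_mulVec, hA.dotProduct_cfc_mulVec,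
    ← Complex.ofReal_sub, Complex.zero_le_real]
  have hAU := hA.mul_eigenvectorUnitary
  have hBV := hB.mul_eigenvectorUnitary
  have hUl : (hA.eigenvectorUnitary : Matrix (Fin n) (Fin n) ℂ)ᴴ * hA.eigenvectorUnitary = 1 :=
    Unitary.coe_star_mul_self hA.eigenvectorUnitary
  have hUr : (hA.eigenvectorUnitary : Matrix (Fin n) (Fin n) ℂ) *
      (hA.eigenvectorUnitary : Matrix (Fin n) (Fin n) ℂ)ᴴ = 1 :=
    Unitary.coe_mul_star_self hA.eigenvectorUnitary
  have hVr : (hB.eigenvectorUnitary : Matrix (Fin n) (Fin n) ℂ) *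
      (hB.eigenvectorUnitary : Matrix (Fin n) (Fin n) ℂ)ᴴ = 1 :=
    Unitary.coe_mul_star_self hB.eigenvectorUnitary
  generalize (hA.eigenvectorUnitary : Matrix (Fin n) (Fin n) ℂ) = U at *
  generalize (hB.eigenvectorUnitary : Matrix (Fin n) (Fin n) ℂ) = V at *
  have hUA : Uᴴ * A = diagonal (fun i => (hA.eigenvalues i : ℂ)) * Uᴴ := by
    calc Uᴴ * A = Uᴴ * (A * U) * Uᴴ := by rw [mul_assoc, mul_assoc, hUr, mul_one]
      _ = _ := by rw [hAU, ← mul_assoc, hUl, one_mul]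
  refine sum_mul_normSq_sub_nonneg hn hf hM (Q := Uᴴ * V) hl hm hAab hBab hp hd (fun i j => ?_)
    ?_ ?_ ?_
  · have h1 : Uᴴ * V * diagonal (fun i => (hB.eigenvalues i : ℂ)) =
        diagonal (fun i => (hA.eigenvalues i : ℂ)) * (Uᴴ * V) +
          vecMulVec (Uᴴ *ᵥ x) (star (Vᴴ *ᵥ x)) := by
      rw [mul_assoc, ← hBV, hBA, add_mul, mul_add, ← mul_assoc, hUA, mul_assoc, star_mulVec,
        conjTranspose_conjTranspose, vecMulVec_mul, mul_vecMulVec]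
    have h2 := congrFun (congrFun h1 i) j
    rw [mul_diagonal, Matrix.add_apply, diagonal_mul, vecMulVec_apply, Pi.star_apply] at h2
    linear_combination h2
  · rw [conjTranspose_mul, conjTranspose_conjTranspose, mulVec_mulVec, mul_assoc, hUr, mul_one]
  · rw [mulVec_mulVec, mul_assoc, hVr, mul_one]
  · rw [conjTranspose_mul, conjTranspose_conjTranspose, mulVec_mulVec, mul_assoc, hUr, mul_one]

open Filter Topology in
open scoped Matrix.Norms.L2Operator in
theorem eventually_spectrum_subset_and_tendsto_cfc {n : ℕ} {X : Type*} [TopologicalSpace X]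
    {a b : ℝ} {f : ℝ → ℝ} (hf : ContinuousOn f (Ioo a b)) {C : X → Matrix (Fin n) (Fin n) ℂ}
    {x₀ : X} (hC : ContinuousAt C x₀) (hsa : ∀ x, (C x).IsHermitian)
    (h₀ : spectrum ℝ (C x₀) ⊆ Ioo a b) :
    (∀ᶠ x in 𝓝 x₀, spectrum ℝ (C x) ⊆ Ioo a b) ∧
      Tendsto (fun x => cfc f (C x)) (𝓝 x₀) (𝓝 (cfc f (C x₀))) := by
  obtain ⟨S, ⟨hS, hSc⟩, hSab⟩ :=
    (spectrum.isCompact (𝕜 := ℝ) (C x₀)).nhdsSet_basis_isCompact.mem_iff.mp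
      (isOpen_Ioo.mem_nhdsSet.mpr h₀)
  have hev : ∀ᶠ x in 𝓝 x₀, spectrum ℝ (C x) ⊆ S :=
    hC.eventually (((upperHemicontinuous_spectrum ℝ _).upperHemicontinuousAt (C x₀) _ hS).mono
      fun _ => subset_of_mem_nhdsSet)
  exact ⟨hev.mono fun _ h => h.trans hSab, hC.tendsto.cfc hSc f hev
    (.of_forall fun x => (hsa x).isSelfAdjoint) (subset_of_mem_nhdsSet hS)
    (hsa x₀).isSelfAdjoint (hf.mono hSab)⟩

theorem eventually_forall_add_mul_ne_zero {ι : Type*} [Finite ι] (c d : ι → ℂ)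
    (h : ∀ i, c i ≠ 0 ∨ d i ≠ 0) :
    ∀ᶠ ε : ℝ in nhdsWithin 0 {0}ᶜ, ∀ i, c i + ε * d i ≠ 0 := by
  refine Filter.eventually_all.mpr fun i => ?_
  have hsub : {ε : ℝ | ε ≠ 0 ∧ c i + ε * d i = 0}.Subsingleton := by
    rintro s ⟨hs0, hs⟩ t ⟨-, ht⟩
    have hd : d i ≠ 0 := by
      rcases h i with hc | hd
      · intro hd
        simp [hd, hc] at hs
      · exact hd
    have : (s : ℂ) * d i = t * d i := by linear_combination hs - ht
    exact_mod_cast mul_right_cancel₀ hd this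
  have hcl : ({ε : ℝ | ε ≠ 0 ∧ c i + ε * d i = 0})ᶜ ∈ nhds (0 : ℝ) :=
    hsub.finite.isClosed.isOpen_compl.mem_nhds (by simp)
  filter_upwards [nhdsWithin_le_nhds hcl, self_mem_nhdsWithin] with ε h1 h2 h3
  exact h1 ⟨h2, h3⟩

theorem posSemidef_cfc_add_vecMulVec_sub {n : ℕ}
    (hn : 1 ≤ n) {a b : ℝ} {f : ℝ → ℝ}
    (hf : ContDiffOn ℝ (2 * n - 1 : ℕ) f (Ioo a b))
    (hM : ∀ t ∈ Ioo a b, (Matrix.of fun i j : Fin n =>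
        iteratedDerivWithin (i.val + j.val + 1) f (Ioo a b) t /
          (Nat.factorial (i.val + j.val + 1) : ℝ)).PosSemidef)
    {A : Matrix (Fin n) (Fin n) ℂ} (x : Fin n → ℂ) (hA : A.IsHermitian)
    (hAab : spectrum ℝ A ⊆ Ioo a b) (hBab : spectrum ℝ (A + vecMulVec x (star x)) ⊆ Ioo a b) :
    (cfc f (A + vecMulVec x (star x)) - cfc f A).PosSemidef := by
  have hAU := hA.mul_eigenvectorUnitary
  have hUl : (hA.eigenvectorUnitary : Matrix (Fin n) (Fin n) ℂ)ᴴ * hA.eigenvectorUnitary = 1 :=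
    Unitary.coe_star_mul_self hA.eigenvectorUnitary
  have hUr : (hA.eigenvectorUnitary : Matrix (Fin n) (Fin n) ℂ) *
      (hA.eigenvectorUnitary : Matrix (Fin n) (Fin n) ℂ)ᴴ = 1 :=
    Unitary.coe_mul_star_self hA.eigenvectorUnitary
  generalize (hA.eigenvectorUnitary : Matrix (Fin n) (Fin n) ℂ) = U at *
  let N : Matrix (Fin n) (Fin n) ℂ := U * diagonal (fun i => (i.val : ℂ)) * Uᴴ
  let Aε : ℝ → Matrix (Fin n) (Fin n) ℂ := fun ε => A + (ε : ℂ) • N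
  let xε : ℝ → Fin n → ℂ := fun ε => x + (ε : ℂ) • (U *ᵥ 1)
  let Bε : ℝ → Matrix (Fin n) (Fin n) ℂ := fun ε => Aε ε + vecMulVec (xε ε) (star (xε ε))
  have hN : N.IsHermitian := by
    refine isHermitian_mul_mul_conjTranspose U (isHermitian_diagonal_of_self_adjoint _ ?_)
    ext i
    simp
  have hAε (ε : ℝ) : (Aε ε).IsHermitian := by
    refine hA.add ?_
    rw [IsHermitian, conjTranspose_smul, hN.eq, Complex.star_def, Complex.conj_ofReal]
  have hBε (ε : ℝ) : (Bε ε).IsHermitian := (hAε ε).add (posSemidef_vecMulVec_self_star _).1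
  have hA0 : Aε 0 = A := by simp [Aε]
  have hB0 : Bε 0 = A + vecMulVec x (star x) := by simp [Bε, xε, hA0]
  have hAc : Continuous Aε := by fun_prop
  have hxc : Continuous xε := by fun_prop
  have hBc : Continuous Bε := by
    refine hAc.add ?_
    exact hxc.matrix_vecMulVec hxc.star
  have hcyc : ∀ᶠ ε in nhdsWithin (0 : ℝ) {0}ᶜ, IsCyclicVector (Aε ε) (xε ε) := by
    have hev := eventually_forall_add_mul_ne_zero (ι := {p : Fin n × Fin n // p.1 ≠ p.2})
      (fun p => (hA.eigenvalues p.1.1 : ℂ) - hA.eigenvalues p.1.2)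
      (fun p => (p.1.1.val : ℂ) - p.1.2.val) (fun p => .inr ?_)
    · filter_upwards [hev, eventually_forall_add_mul_ne_zero (Uᴴ *ᵥ x) 1 (by simp)] with ε h1 h2
      refine IsCyclicVector.of_diagonalization (U := U)
        (l := fun i => (hA.eigenvalues i : ℂ) + ε * i.val) ?_ hUl hUr (fun i j hij => ?_)
        (fun i => ?_)
      · simp only [Aε, N, add_mul, hAU, smul_mul_assoc, mul_assoc, hUl, mul_one]
        rw [← mul_smul_comm, ← mul_add]
        congr 1
        ext i j
        by_cases hij : i = j <;> simp [hij]
      · by_contra hne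
        refine h1 ⟨(i, j), hne⟩ ?_
        simp only at hij ⊢
        linear_combination hij
      · have := h2 i
        simpa [xε, mulVec_add, mulVec_smul, mulVec_mulVec, hUl] using this
    · rw [sub_ne_zero]
      exact_mod_cast fun h => p.2 (Fin.ext h)
  obtain ⟨hAs, hAt⟩ := eventually_spectrum_subset_and_tendsto_cfc hf.continuousOn
    hAc.continuousAt hAε (hA0 ▸ hAab)
  obtain ⟨hBs, hBt⟩ := eventually_spectrum_subset_and_tendsto_cfc hf.continuousOn
    hBc.continuousAt hBε (hB0 ▸ hBab)
  rw [hA0] at hAt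
  rw [hB0] at hBt
  have hpos : ∀ᶠ ε in nhdsWithin (0 : ℝ) {0}ᶜ, (cfc f (Bε ε) - cfc f (Aε ε)).PosSemidef := by
    filter_upwards [hcyc, nhdsWithin_le_nhds hAs, nhdsWithin_le_nhds hBs] with ε h1 h2 h3
    rw [(hAε ε).spectrum_real_eq_range_eigenvalues, range_subset_iff] at h2
    rw [(hBε ε).spectrum_real_eq_range_eigenvalues, range_subset_iff] at h3
    rw [(hAε ε).cfc_eq, (hBε ε).cfc_eq]
    exact posSemidef_cfc_add_vecMulVec_sub_of_isCyclicVector hn hf hM h1 rfl _ _ h2 h3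
  refine .of_dotProduct_mulVec_nonneg
    (IsHermitian.sub (cfc_predicate f _) (cfc_predicate f _)) fun w => ?_
  have hlim : Filter.Tendsto (fun ε => star w ⬝ᵥ ((cfc f (Bε ε) - cfc f (Aε ε)) *ᵥ w))
      (nhdsWithin (0 : ℝ) {0}ᶜ)
      (nhds (star w ⬝ᵥ ((cfc f (A + vecMulVec x (star x)) - cfc f A) *ᵥ w))) := by
    have hcont : Continuous fun C : Matrix (Fin n) (Fin n) ℂ => star w ⬝ᵥ (C *ᵥ w) := by fun_prop
    exact (hcont.tendsto _).comp ((hBt.sub hAt).mono_left nhdsWithin_le_nhds)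
  exact ge_of_tendsto hlim (hpos.mono fun ε h => h.dotProduct_mulVec_nonneg w)

open scoped MatrixOrder in
theorem spectrum_subset_Ioo_of_le_of_le {n : ℕ} {a b : ℝ} {A B C : Matrix (Fin n) (Fin n) ℂ}
    (hA : A.IsHermitian) (hB : B.IsHermitian) (hC : C.IsHermitian)
    (hAab : spectrum ℝ A ⊆ Ioo a b) (hBab : spectrum ℝ B ⊆ Ioo a b) (hAC : A ≤ C) (hCB : C ≤ B) :
    spectrum ℝ C ⊆ Ioo a b := by
  intro c hc
  have hn : Nonempty (Fin n) := by
    by_contra h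
    rw [hC.spectrum_real_eq_range_eigenvalues] at hc
    obtain ⟨i, -⟩ := hc
    exact h ⟨i⟩
  have hfin {D : Matrix (Fin n) (Fin n) ℂ} (hD : D.IsHermitian) :
      (spectrum ℝ D).Finite ∧ (spectrum ℝ D).Nonempty := by
    rw [hD.spectrum_real_eq_range_eigenvalues]
    exact ⟨finite_range _, range_nonempty _⟩
  obtain ⟨l, hl, hl'⟩ := (hfin hA).1.isCompact.exists_isLeast (hfin hA).2
  obtain ⟨m, hm, hm'⟩ := (hfin hB).1.isCompact.exists_isGreatest (hfin hB).2
  refine ⟨(hAab hl).1.trans_le ?_, lt_of_le_of_lt ?_ (hBab hm).2⟩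
  · exact (algebraMap_le_iff_le_spectrum hC.isSelfAdjoint).mp
      (((algebraMap_le_iff_le_spectrum hA.isSelfAdjoint).mpr fun x hx => hl' hx).trans hAC) c hc
  · exact (le_algebraMap_iff_spectrum_le hC.isSelfAdjoint).mp
      (hCB.trans ((le_algebraMap_iff_spectrum_le hB.isSelfAdjoint).mpr fun x hx => hm' hx)) c hc

open scoped MatrixOrder Matrix.Norms.L2Operator in
theorem Matrix.PosSemidef.exists_eq_sum_vecMulVec {n : ℕ} {P : Matrix (Fin n) (Fin n) ℂ}
    (hP : P.PosSemidef) : ∃ v : Fin n → Fin n → ℂ, P = ∑ k, vecMulVec (v k) (star (v k)) := by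
  obtain ⟨S, rfl⟩ := CStarAlgebra.nonneg_iff_eq_star_mul_self.mp hP.nonneg
  refine ⟨fun k => star (S k), ?_⟩
  ext i j
  simp [mul_apply, Matrix.sum_apply, vecMulVec_apply]

/-- If the Hankel matrix `M_n(t,f)` is positive semi-definite for every `t ∈ (a,b)`, then `f`
is matrix monotone of order `n` on `(a,b)`: for Hermitian `A ≤ B` with spectra in `(a,b)`,
`f(A) ≤ f(B)` (matrix functions via the functional calculus for Hermitian matrices). -/
theorem stmt11 (n : ℕ) (hn : 2 ≤ n) (a b : ℝ) (f : ℝ → ℝ)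
    (hf : ContDiffOn ℝ (2 * n - 1 : ℕ) f (Ioo a b))
    (hM : ∀ t ∈ Ioo a b,
      (Matrix.of fun i j : Fin n =>
        iteratedDerivWithin (i.val + j.val + 1) f (Ioo a b) t /
          (Nat.factorial (i.val + j.val + 1) : ℝ)).PosSemidef) :
    ∀ (A B : Matrix (Fin n) (Fin n) ℂ) (hA : A.IsHermitian) (hB : B.IsHermitian),
      (∀ i, hA.eigenvalues i ∈ Ioo a b) → (∀ i, hB.eigenvalues i ∈ Ioo a b) →
      (B - A).PosSemidef → (hB.cfc f - hA.cfc f).PosSemidef := by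
  intro A B hA hB hAab hBab hBA
  rw [← range_subset_iff, ← hA.spectrum_real_eq_range_eigenvalues] at hAab
  rw [← range_subset_iff, ← hB.spectrum_real_eq_range_eigenvalues] at hBab
  rw [← hA.cfc_eq, ← hB.cfc_eq]
  obtain ⟨v, hv⟩ := hBA.exists_eq_sum_vecMulVec
  have hsum (s : Finset (Fin n)) : (∑ k ∈ s, vecMulVec (v k) (star (v k))).PosSemidef :=
    posSemidef_sum s fun k _ => posSemidef_vecMulVec_self_star (v k)
  have hspec (s : Finset (Fin n)) :
      spectrum ℝ (A + ∑ k ∈ s, vecMulVec (v k) (star (v k))) ⊆ Ioo a b := by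
    refine spectrum_subset_Ioo_of_le_of_le hA hB (hA.add (hsum s).1) hAab hBab ?_ ?_
    · rw [Matrix.le_iff, add_sub_cancel_left]
      exact hsum s
    · rw [Matrix.le_iff, ← sub_sub, hv, ← Finset.sum_compl_add_sum s, add_sub_cancel_right]
      exact hsum sᶜ
  have hmono (s : Finset (Fin n)) :
      (cfc f (A + ∑ k ∈ s, vecMulVec (v k) (star (v k))) - cfc f A).PosSemidef := by
    induction s using Finset.induction_on with
    | empty => simpa using PosSemidef.zero
    | insert k s hk ih =>
      have hk' := hspec (insert k s)
      rw [Finset.sum_insert hk, add_comm (vecMulVec _ _), ← add_assoc] at hk' ⊢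
      have := (posSemidef_cfc_add_vecMulVec_sub (by lia) hf hM (v k) (hA.add (hsum s).1)
        (hspec s) hk').add ih
      rwa [sub_add_sub_cancel] at this
  have := hmono Finset.univ
  rwa [← hv, add_sub_cancel] at this
end

section
/- Let n ≥ 2 and f ∈ C^{2n}(a,b). If the Hankel matrix K_n(t,f) = (f^{(i+j)}(t)/(i+j)!)_{ij} is positive semi-definite for every t ∈ (a,b), then f is matrix convex of order n on (a,b): for Hermitian n×n matrices A, B with spectra in (a,b) and λ ∈ [0,1], f(λA+(1−λ)B) ≤ λf(A)+(1−λ)f(B). -/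
open Set Matrix
open scoped ComplexOrder

section PolynomialDivision

open Polynomial

lemma Polynomial.divByMonic_mul (p : ℝ[X]) {q r : ℝ[X]} (hq : q.Monic) (hr : r.Monic) :
    p /ₘ (q * r) = (p /ₘ q) /ₘ r := by
  refine (div_modByMonic_unique _ (p %ₘ q + q * ((p /ₘ q) %ₘ r)) (hq.mul hr) ⟨?_, ?_⟩).1
  · linear_combination modByMonic_add_div p q + q * modByMonic_add_div (p /ₘ q) r
  · rw [degree_mul]
    refine (degree_add_le _ _).trans_lt (max_lt ?_ ?_)
    · calc (p %ₘ q).degree < q.degree := degree_modByMonic_lt _ hq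
        _ ≤ q.degree + r.degree := le_add_of_nonneg_right (zero_le_degree_iff.2 hr.ne_zero)
    · rw [degree_mul, degree_eq_natDegree hq.ne_zero]
      exact WithBot.add_lt_add_left (by simp) (degree_modByMonic_lt _ hr)

lemma Polynomial.mul_divByMonic_mul_cancel (p : ℝ[X]) {q r : ℝ[X]} (hq : q.Monic)
    (hr : r.Monic) : (q * p) /ₘ (q * r) = p /ₘ r := by
  rw [divByMonic_mul _ hq hr, mul_divByMonic_cancel_left _ hq]

lemma Polynomial.add_divByMonic {r : ℝ[X]} (hr : r.Monic) (p q : ℝ[X]) :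
    (p + q) /ₘ r = p /ₘ r + q /ₘ r := by
  refine (div_modByMonic_unique _ (p %ₘ r + q %ₘ r) hr ⟨?_, ?_⟩).1
  · linear_combination modByMonic_add_div p r + modByMonic_add_div q r
  · rw [← add_modByMonic]
    exact degree_modByMonic_lt _ hr

lemma Polynomial.C_mul_divByMonic {r : ℝ[X]} (hr : r.Monic) (c : ℝ) (p : ℝ[X]) :
    (C c * p) /ₘ r = C c * (p /ₘ r) := by
  refine (div_modByMonic_unique _ (C c * (p %ₘ r)) hr ⟨?_, ?_⟩).1
  · linear_combination C c * modByMonic_add_div p r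
  · rw [C_mul']
    exact (degree_smul_le _ _).trans_lt (degree_modByMonic_lt _ hr)

lemma Polynomial.sum_divByMonic {ι : Type*} {r : ℝ[X]} (hr : r.Monic) (s : Finset ι)
    (p : ι → ℝ[X]) : (∑ i ∈ s, p i) /ₘ r = ∑ i ∈ s, p i /ₘ r := by
  classical
  induction s using Finset.induction_on with
  | empty => simp
  | insert i s hi ih => rw [Finset.sum_insert hi, Finset.sum_insert hi, add_divByMonic hr, ih]

lemma Polynomial.iterate_derivative_X_sub_C_mul (G : ℝ[X]) (x c : ℝ) (m : ℕ) :
    derivative^[m + 1] ((X - C x) * G + C c) =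
      (X - C x) * derivative^[m + 1] G + (m + 1 : ℝ[X]) * derivative^[m] G := by
  induction m with
  | zero => simp; ring
  | succ m ih =>
    rw [Function.iterate_succ_apply', ih]
    simp only [derivative_add, derivative_mul, derivative_sub, derivative_X, derivative_C,
      derivative_natCast, derivative_one, ← Function.iterate_succ_apply' derivative]
    push_cast
    ring

lemma Polynomial.neg_le_eval_iterate_derivative_divByMonic {α β δ x : ℝ} (hδ : 0 ≤ δ)
    (hx : x ∈ Icc α β) (g : ℝ[X]) (m : ℕ)
    (hg : ∀ t ∈ Icc α β, -δ ≤ (derivative^[m + 1] g).eval t) :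
    ∀ y ∈ Icc α β, -δ ≤ (derivative^[m] (g /ₘ (X - C x))).eval y := by
  intro y hy
  set G := g /ₘ (X - C x) with hG
  have hgG : g = (X - C x) * G + C (g.eval x) := by
    rw [hG, X_sub_C_mul_divByMonic_eq_sub_modByMonic, modByMonic_X_sub_C_eq_C_eval]; ring
  have hD : ∀ t ∈ Icc α β, -δ ≤ (t - x) * (derivative^[m + 1] G).eval t
      + (m + 1) * (derivative^[m] G).eval t := by
    intro t ht
    have := hg t ht
    rw [hgG, iterate_derivative_X_sub_C_mul] at this
    simpa using this
  rcases eq_or_ne y x with rfl | hne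
  · have := hD y hy
    simp only [sub_self, zero_mul, zero_add] at this
    by_contra! hlt
    nlinarith [(Nat.cast_nonneg m : (0 : ℝ) ≤ m)]
  set d := y - x with hd
  have hd0 : d ≠ 0 := sub_ne_zero.2 hne
  let w : ℝ[X] := X ^ (m + 1) * ((derivative^[m] G).comp (C x + C d * X) + C δ)
  obtain ⟨θ, hθ, hw⟩ := exists_hasDerivAt_eq_slope (fun t => w.eval t)
    (fun t => w.derivative.eval t) one_pos w.continuous.continuousOn
    (fun t _ => w.hasDerivAt t)
  have hmem : x + d * θ ∈ Icc α β := by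
    have : x + d * θ = (1 - θ) * x + θ * y := by rw [hd]; ring
    rw [this]
    exact (convex_Icc α β) hx hy (by linarith [hθ.2]) hθ.1.le (by ring)
  have hpos := hD _ hmem
  have hder : w.derivative.eval θ = θ ^ m *
      ((x + d * θ - x) * (derivative^[m + 1] G).eval (x + d * θ)
      + (m + 1) * (derivative^[m] G).eval (x + d * θ) + (m + 1) * δ) := by
    simp only [w, derivative_mul, derivative_comp, derivative_add, derivative_X_pow,
      derivative_C, derivative_X, ← Function.iterate_succ_apply' derivative]
    simp
    ring
  have h1 : w.eval 1 = (derivative^[m] G).eval y + δ := by simp [w, hd]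
  have h0 : w.eval 0 = 0 := by simp [w]
  simp only [h1, h0, hder, sub_zero, div_one] at hw
  have : 0 ≤ θ ^ m * ((x + d * θ - x) * (derivative^[m + 1] G).eval (x + d * θ)
      + (m + 1) * (derivative^[m] G).eval (x + d * θ) + (m + 1) * δ) := by
    refine mul_nonneg (pow_nonneg hθ.1.le _) ?_
    nlinarith [mul_nonneg (Nat.cast_nonneg m : (0 : ℝ) ≤ m) hδ]
  linarith

lemma Polynomial.neg_le_eval_iterate_derivative_divByMonic_prod {ι : Type*} {α β δ : ℝ}
    (hδ : 0 ≤ δ) (x : ι → ℝ) (hx : ∀ i, x i ∈ Icc α β) (s : Finset ι) (m : ℕ) (g : ℝ[X])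
    (hg : ∀ t ∈ Icc α β, -δ ≤ (derivative^[m + s.card] g).eval t) :
    ∀ y ∈ Icc α β, -δ ≤ (derivative^[m] (g /ₘ ∏ i ∈ s, (X - C (x i)))).eval y := by
  classical
  induction s using Finset.induction_on generalizing g with
  | empty => simpa using hg
  | insert i s hi ih =>
    rw [Finset.prod_insert hi, divByMonic_mul _ (monic_X_sub_C _)
      (monic_prod_of_monic _ _ fun i _ => monic_X_sub_C _)]
    refine ih _ (neg_le_eval_iterate_derivative_divByMonic hδ (hx i) g _ ?_)
    rwa [Finset.card_insert_of_notMem hi, ← add_assoc] at hg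

/-- The polynomial `∑ i, w i * ∏ l ≠ i, (X - x l)`. -/
noncomputable def krausPoly {n : ℕ} (x w : Fin n → ℝ) : ℝ[X] :=
  ∑ i, C (w i) * ∏ l ∈ Finset.univ.erase i, (X - C (x l))

lemma sum_kraus_eq {n : ℕ} (x w : Fin n → ℝ) (P : ℝ[X]) (y : ℝ) :
    ∑ i, ∑ k, w i * w k * (P /ₘ ((X - C (x i)) * (X - C (x k)))).eval y =
      (krausPoly x w * krausPoly x w * P /ₘ
        ((∏ i, (X - C (x i))) * ∏ i, (X - C (x i)))).eval y := by
  have hm : ∀ s : Finset (Fin n), (∏ i ∈ s, (X - C (x i))).Monic :=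
    fun s => monic_prod_of_monic _ _ fun i _ => monic_X_sub_C _
  have hexp : krausPoly x w * krausPoly x w * P = ∑ i, ∑ k, C (w i) * (C (w k) *
      ((∏ l ∈ Finset.univ.erase i, (X - C (x l))) *
        ((∏ l ∈ Finset.univ.erase k, (X - C (x l))) * P))) := by
    rw [krausPoly, Finset.sum_mul_sum, Finset.sum_mul]
    refine Finset.sum_congr rfl fun i _ => ?_
    rw [Finset.sum_mul]
    exact Finset.sum_congr rfl fun k _ => by ring
  rw [hexp, sum_divByMonic ((hm _).mul (hm _)), eval_finsetSum]
  refine Finset.sum_congr rfl fun i _ => ?_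
  rw [sum_divByMonic ((hm _).mul (hm _)), eval_finsetSum]
  refine Finset.sum_congr rfl fun k _ => ?_
  have hW : (∏ i, (X - C (x i))) * ∏ i, (X - C (x i)) =
      (∏ l ∈ Finset.univ.erase i, (X - C (x l))) *
        ((∏ l ∈ Finset.univ.erase k, (X - C (x l))) * ((X - C (x i)) * (X - C (x k)))) := by
    have := fun i => Finset.prod_erase_mul Finset.univ (fun l => X - C (x l)) (Finset.mem_univ i)
    calc _ = ((∏ l ∈ Finset.univ.erase i, (X - C (x l))) * (X - C (x i))) *
        ((∏ l ∈ Finset.univ.erase k, (X - C (x l))) * (X - C (x k))) := by rw [this, this]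
      _ = _ := by ring
  rw [C_mul_divByMonic ((hm _).mul (hm _)), C_mul_divByMonic ((hm _).mul (hm _)), hW,
    mul_divByMonic_mul_cancel _ (hm _)
      ((hm _).mul ((monic_X_sub_C _).mul (monic_X_sub_C _))),
    mul_divByMonic_mul_cancel _ (hm _) ((monic_X_sub_C _).mul (monic_X_sub_C _))]
  simp [mul_assoc]

lemma neg_le_sum_kraus {n : ℕ} {α β δ : ℝ} (hδ : 0 ≤ δ) (x w : Fin n → ℝ)
    (hx : ∀ i, x i ∈ Icc α β) (P : ℝ[X])
    (hP : ∀ t ∈ Icc α β,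
      -δ ≤ (derivative^[2 * n] (krausPoly x w * krausPoly x w * P)).eval t) (j : Fin n) :
    -δ ≤ ∑ i, ∑ k, w i * w k * (P /ₘ ((X - C (x i)) * (X - C (x k)))).eval (x j) := by
  have hm : (∏ i, (X - C (x i))).Monic := monic_prod_of_monic _ _ fun i _ => monic_X_sub_C _
  rw [sum_kraus_eq, divByMonic_mul _ hm hm]
  refine neg_le_eval_iterate_derivative_divByMonic_prod hδ x hx Finset.univ 0 _
    (neg_le_eval_iterate_derivative_divByMonic_prod hδ x hx Finset.univ _ _ ?_) _ (hx j)
  simpa [two_mul] using hP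

lemma Polynomial.coeff_mul_self_mul {n : ℕ} (Q R : ℝ[X]) (hQ : Q.natDegree < n) :
    (Q * Q * R).coeff (2 * n) = ∑ i : Fin n, ∑ j : Fin n,
      Q.coeff (n - 1 - i) * Q.coeff (n - 1 - j) * R.coeff (i + j + 2) := by
  have hQs : Q = ∑ i : Fin n, C (Q.coeff (n - 1 - i)) * X ^ (n - 1 - i : ℕ) := by
    rw [← Equiv.sum_comp Fin.revPerm]
    conv_lhs => rw [Q.as_sum_range_C_mul_X_pow' hQ]
    rw [Finset.sum_range]
    refine Finset.sum_congr rfl fun i _ => ?_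
    have : n - 1 - (Fin.rev i : ℕ) = i := by rw [Fin.val_rev]; omega
    rw [Fin.revPerm_apply, this]
  conv_lhs => rw [hQs]
  rw [Finset.sum_mul_sum, Finset.sum_mul, finsetSum_coeff]
  refine Finset.sum_congr rfl fun i _ => ?_
  rw [Finset.sum_mul, finsetSum_coeff]
  refine Finset.sum_congr rfl fun j _ => ?_
  have : 2 * n = (i + j + 2) + ((n - 1 - i) + (n - 1 - j)) := by omega
  rw [show C (Q.coeff (n - 1 - i)) * X ^ (n - 1 - i : ℕ) *
    (C (Q.coeff (n - 1 - j)) * X ^ (n - 1 - j : ℕ)) * R =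
    C (Q.coeff (n - 1 - i) * Q.coeff (n - 1 - j)) *
      (R * X ^ ((n - 1 - i) + (n - 1 - j) : ℕ)) by rw [C_mul, pow_add]; ring, coeff_C_mul,
    this, coeff_mul_X_pow]

end PolynomialDivision

section HankelBound

open Polynomial

lemma Polynomial.abs_coeff_taylor_prod_le {ι : Type*} {t r : ℝ} (hr : 0 ≤ r) (x : ι → ℝ)
    (hx : ∀ i, |t - x i| ≤ r) (s : Finset ι) (k : ℕ) :
    |(taylor t (∏ i ∈ s, (X - C (x i)))).coeff k| ≤ (1 + r) ^ s.card := by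
  classical
  induction s using Finset.induction_on generalizing k with
  | empty =>
    simp only [Finset.prod_empty, taylor_one, map_one, coeff_one, Finset.card_empty, pow_zero]
    split_ifs <;> simp
  | insert i s hi ih =>
    have h : taylor t (∏ l ∈ insert i s, (X - C (x l))) =
        X * taylor t (∏ l ∈ s, (X - C (x l))) +
          C (t - x i) * taylor t (∏ l ∈ s, (X - C (x l))) := by
      rw [Finset.prod_insert hi, taylor_mul, map_sub, taylor_X, taylor_C, C_sub]
      ring
    have hX : |(X * taylor t (∏ l ∈ s, (X - C (x l)))).coeff k| ≤ (1 + r) ^ s.card := by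
      cases k with
      | zero => simp only [mul_coeff_zero, coeff_X_zero, zero_mul, abs_zero]; positivity
      | succ k => rw [coeff_X_mul]; exact ih k
    rw [h, coeff_add, Finset.card_insert_of_notMem hi, pow_succ, mul_add, mul_one]
    refine (abs_add_le _ _).trans (add_le_add hX ?_)
    rw [coeff_C_mul, abs_mul, mul_comm]
    exact mul_le_mul (ih k) (hx i) (abs_nonneg _) (by positivity)

lemma abs_coeff_taylor_krausPoly_le {n : ℕ} {t r : ℝ} (hr : 0 ≤ r) (x w : Fin n → ℝ)
    (hx : ∀ i, |t - x i| ≤ r) (k : ℕ) :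
    |(taylor t (krausPoly x w)).coeff k| ≤ (∑ i, |w i|) * (1 + r) ^ n := by
  rw [krausPoly, map_sum, finsetSum_coeff, Finset.sum_mul]
  refine (Finset.abs_sum_le_sum_abs _ _).trans (Finset.sum_le_sum fun i _ => ?_)
  rw [taylor_mul, taylor_C, coeff_C_mul, abs_mul]
  refine mul_le_mul_of_nonneg_left ((abs_coeff_taylor_prod_le hr x hx _ _).trans ?_) (abs_nonneg _)
  exact pow_le_pow_right₀ (by linarith) ((Finset.card_le_univ _).trans_eq (Fintype.card_fin n))

lemma natDegree_krausPoly_lt {n : ℕ} (hn : 0 < n) (x w : Fin n → ℝ) :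
    (krausPoly x w).natDegree < n := by
  refine (natDegree_sum_le_of_forall_le (n := n - 1) _ _ fun i _ => ?_).trans_lt (by omega)
  refine (natDegree_C_mul_le _ _).trans ?_
  rw [natDegree_prod_of_monic _ _ fun i _ => monic_X_sub_C _]
  simp

/-- If the Taylor coefficients of `P` are `ε`-close to those forming positive semidefinite Hankel
matrices, then the Kraus quadratic forms of `P` are bounded below by a multiple of `-ε`. -/
lemma neg_le_sum_kraus_of_hankel {n : ℕ} (hn : 0 < n) {α β ε c : ℝ} (hαβ : α ≤ β) (hε : 0 ≤ ε)
    (F : ℕ → ℝ → ℝ)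
    (hF : ∀ t ∈ Icc α β, (Matrix.of fun i j : Fin n => F (i.val + j.val + 2) t).PosSemidef)
    (P : ℝ[X]) (hP : ∀ m ≤ 2 * n, ∀ t ∈ Icc α β, |(taylor t P).coeff m - F m t| ≤ ε)
    (x w : Fin n → ℝ) (hx : ∀ i, x i ∈ Icc α β) (hw : ∑ i, |w i| ≤ c) (j : Fin n) :
    -(((2 * n).factorial * n ^ 2 * (c * (1 + (β - α)) ^ n) ^ 2) * ε) ≤
      ∑ i, ∑ k, w i * w k * (P /ₘ ((X - C (x i)) * (X - C (x k)))).eval (x j) := by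
  have hc : 0 ≤ c := (Finset.sum_nonneg fun i _ => abs_nonneg _).trans hw
  refine neg_le_sum_kraus (by positivity) x w hx P (fun t ht => ?_) j
  set K := c * (1 + (β - α)) ^ n with hK
  have hK0 : 0 ≤ K := mul_nonneg hc (pow_nonneg (by linarith) _)
  set Q := taylor t (krausPoly x w) with hQ
  have hQK : ∀ k, |Q.coeff k| ≤ K := fun k => by
    refine (abs_coeff_taylor_krausPoly_le (r := β - α) (by linarith) x w (fun i => ?_) k).trans ?_
    · rw [abs_le]; constructor <;> linarith [ht.1, ht.2, (hx i).1, (hx i).2]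
    · exact mul_le_mul_of_nonneg_right hw (pow_nonneg (by linarith) _)
  have hcoeff : (derivative^[2 * n] (krausPoly x w * krausPoly x w * P)).eval t =
      (2 * n).factorial * (Q * Q * taylor t P).coeff (2 * n) := by
    rw [hQ, ← taylor_mul, ← taylor_mul, taylor_coeff, ← factorial_smul_hasseDeriv]
    simp
  have hQn : Q.natDegree < n := by
    rw [hQ, natDegree_taylor]
    exact natDegree_krausPoly_lt hn x w
  rw [hcoeff, coeff_mul_self_mul _ _ hQn]
  set q : Fin n → ℝ := fun i => Q.coeff (n - 1 - i) with hq
  have h1 : 0 ≤ ∑ i : Fin n, ∑ k : Fin n, q i * q k * F (i.val + k.val + 2) t := by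
    have := (hF t ht).dotProduct_mulVec_nonneg q
    simp only [dotProduct, mulVec, star_trivial, of_apply, Finset.mul_sum] at this
    refine this.trans_eq (Finset.sum_congr rfl fun i _ => Finset.sum_congr rfl fun k _ => by ring)
  have h2 : |∑ i : Fin n, ∑ k : Fin n,
      q i * q k * ((taylor t P).coeff (i.val + k.val + 2) - F (i.val + k.val + 2) t)| ≤
      ∑ i : Fin n, ∑ k : Fin n, K * K * ε := by
    refine (Finset.abs_sum_le_sum_abs _ _).trans (Finset.sum_le_sum fun i _ => ?_)
    refine (Finset.abs_sum_le_sum_abs _ _).trans (Finset.sum_le_sum fun k _ => ?_)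
    rw [abs_mul, abs_mul]
    exact mul_le_mul (mul_le_mul (hQK _) (hQK _) (abs_nonneg _) hK0)
      (hP _ (by omega) t ht) (abs_nonneg _) (by positivity)
  have h3 : ∑ i : Fin n, ∑ k : Fin n, q i * q k * (taylor t P).coeff (i.val + k.val + 2) =
      ∑ i : Fin n, ∑ k : Fin n, q i * q k * F (i.val + k.val + 2) t +
      ∑ i : Fin n, ∑ k : Fin n,
      q i * q k * ((taylor t P).coeff (i.val + k.val + 2) - F (i.val + k.val + 2) t) := by
    rw [← Finset.sum_add_distrib]
    refine Finset.sum_congr rfl fun i _ => ?_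
    rw [← Finset.sum_add_distrib]
    exact Finset.sum_congr rfl fun k _ => by ring
  simp only [Finset.sum_const, Finset.card_univ, Fintype.card_fin, nsmul_eq_mul] at h2
  have h4 : -(n ^ 2 * K ^ 2 * ε) ≤
      ∑ i : Fin n, ∑ k : Fin n, q i * q k * (taylor t P).coeff (i.val + k.val + 2) := by
    rw [h3]
    have := (abs_le.1 h2).1
    linarith
  calc _ = ((2 * n).factorial : ℝ) * -(n ^ 2 * K ^ 2 * ε) := by ring
    _ ≤ _ := mul_le_mul_of_nonneg_left h4 (by positivity)

end HankelBound

section Approximation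

open Polynomial

lemma Polynomial.exists_derivative_eq (p : ℝ[X]) : ∃ q : ℝ[X], derivative q = p := by
  induction p using Polynomial.induction_on' with
  | add p q hp hq =>
    obtain ⟨p', rfl⟩ := hp
    obtain ⟨q', rfl⟩ := hq
    exact ⟨p' + q', derivative_add⟩
  | monomial k c =>
    refine ⟨monomial (k + 1) (c / (k + 1)), ?_⟩
    rw [derivative_monomial]
    have : (k + 1 : ℝ) ≠ 0 := by positivity
    simp [this]

/-- A `C^N` function on an open interval is approximated, together with its derivatives up to
order `N`, by polynomials on each compact subinterval. -/
lemma exists_polynomial_near_iteratedDerivWithin {a b α β : ℝ} (hα : α ∈ Ioo a b)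
    (hβ : β ∈ Ioo a b) (hαβ : α ≤ β) (N : ℕ) (f : ℝ → ℝ) (hf : ContDiffOn ℝ N f (Ioo a b))
    (ε : ℝ) (hε : 0 < ε) :
    ∃ P : ℝ[X], ∀ m ≤ N, ∀ t ∈ Icc α β,
      |(derivative^[m] P).eval t - iteratedDerivWithin m f (Ioo a b) t| ≤ ε := by
  have hsub : Icc α β ⊆ Ioo a b := fun t ht => ⟨hα.1.trans_le ht.1, ht.2.trans_lt hβ.2⟩
  induction N generalizing f ε with
  | zero =>
    obtain ⟨P, hP⟩ := exists_polynomial_near_of_continuousOn α β f (hf.continuousOn.mono hsub) ε hε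
    refine ⟨P, fun m hm t ht => ?_⟩
    obtain rfl : m = 0 := by omega
    simpa using (hP t ht).le
  | succ N ih =>
    have hu : UniqueDiffOn ℝ (Ioo a b) := isOpen_Ioo.uniqueDiffOn
    have hf' : ContDiffOn ℝ N (derivWithin f (Ioo a b)) (Ioo a b) :=
      hf.derivWithin hu (by norm_cast)
    obtain ⟨Q, hQ⟩ := ih _ hf' (ε / (1 + (β - α))) (by apply div_pos hε; linarith)
    obtain ⟨R, hR⟩ := exists_derivative_eq Q
    have hle : ε / (1 + (β - α)) ≤ ε := div_le_self hε.le (by linarith)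
    refine ⟨R + C (f α - R.eval α), fun m hm t ht => ?_⟩
    cases m with
    | succ m =>
      rw [Function.iterate_succ_apply, derivative_add, derivative_C, add_zero, hR,
        iteratedDerivWithin_succ']
      exact (hQ m (by omega) t ht).trans hle
    | zero =>
      let g : ℝ → ℝ := fun t => (R + C (f α - R.eval α)).eval t - f t
      have hg : ∀ s ∈ Icc α β, HasDerivWithinAt g (Q.eval s - derivWithin f (Ioo a b) s)
          (Icc α β) s := fun s hs => by
        have h1 : HasDerivAt (fun t => (R + C (f α - R.eval α)).eval t) (Q.eval s) s := by
          have := (R + C (f α - R.eval α)).hasDerivAt s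
          rwa [derivative_add, derivative_C, add_zero, hR] at this
        have h2 : HasDerivWithinAt f (derivWithin f (Ioo a b) s) (Ioo a b) s :=
          ((hf.differentiableOn (by norm_cast)) s (hsub hs)).hasDerivWithinAt
        exact h1.hasDerivWithinAt.sub (h2.mono hsub)
      have hb := (convex_Icc α β).norm_image_sub_le_of_norm_hasDerivWithin_le
        (C := ε / (1 + (β - α))) hg (fun s hs => by
          have := hQ 0 (by omega) s hs
          simpa using this) (left_mem_Icc.2 hαβ) ht
      have hgα : g α = 0 := by simp [g]
      rw [hgα, sub_zero, Real.norm_eq_abs, Real.norm_eq_abs, abs_of_nonneg (sub_nonneg.2 ht.1)]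
        at hb
      simp only [Function.iterate_zero, id, iteratedDerivWithin_zero]
      refine hb.trans ?_
      rw [div_mul_eq_mul_div, div_le_iff₀ (by linarith)]
      exact mul_le_mul_of_nonneg_left (by linarith [ht.2]) hε.le

end Approximation

section MatrixDerivative

open Polynomial

variable {n : ℕ}

lemma aeval_conj_diagonal {U : Matrix (Fin n) (Fin n) ℂ} (hU : star U * U = 1)
    (hU' : U * star U = 1) (x : Fin n → ℝ) (P : ℝ[X]) :
    aeval (U * diagonal (fun i => (x i : ℂ)) * star U) P =
      U * diagonal (fun i => ((P.eval (x i) : ℝ) : ℂ)) * star U := by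
  induction P using Polynomial.induction_on with
  | C c =>
    have : (diagonal fun _ : Fin n => (c : ℂ)) = c • (1 : Matrix (Fin n) (Fin n) ℂ) := by
      rw [← diagonal_one, ← diagonal_smul]; congr 1; ext; simp
    simp only [aeval_C, eval_C, this, mul_smul_comm, smul_mul_assoc, mul_one, hU']
    rw [Algebra.algebraMap_eq_smul_one]
  | add p q hp hq =>
    rw [map_add, hp, hq, ← add_mul, ← mul_add, diagonal_add]
    simp
  | monomial k c ih =>
    rw [pow_succ, ← mul_assoc, map_mul, ih, aeval_X]
    calc _ = U * (diagonal (fun i => (((C c * X ^ k).eval (x i) : ℝ) : ℂ)) * (star U * U) *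
          diagonal (fun i => (x i : ℂ))) * star U := by simp only [mul_assoc]
      _ = _ := by
        rw [hU, mul_one, diagonal_mul_diagonal]
        simp

lemma Polynomial.X_mul_divByMonic_X_sub_C (P : ℝ[X]) (x : ℝ) :
    (X * P) /ₘ (X - C x) = P + C x * (P /ₘ (X - C x)) := by
  refine (div_modByMonic_unique _ (C x * (P %ₘ (X - C x))) (monic_X_sub_C x) ⟨?_, ?_⟩).1
  · linear_combination C x * modByMonic_add_div P (X - C x)
  · rw [C_mul']
    exact (degree_smul_le _ _).trans_lt (degree_modByMonic_lt _ (monic_X_sub_C x))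

lemma Polynomial.X_mul_divByMonic_mul_X_sub_C (P : ℝ[X]) (x y : ℝ) :
    (X * P) /ₘ ((X - C x) * (X - C y)) =
      P /ₘ (X - C y) + C x * (P /ₘ ((X - C x) * (X - C y))) := by
  rw [divByMonic_mul _ (monic_X_sub_C x) (monic_X_sub_C y), X_mul_divByMonic_X_sub_C,
    add_divByMonic (monic_X_sub_C y), C_mul_divByMonic (monic_X_sub_C y),
    divByMonic_mul _ (monic_X_sub_C x) (monic_X_sub_C y)]

lemma Polynomial.eval_divByMonic_X_sub_C_comm (P : ℝ[X]) (x y : ℝ) :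
    (P /ₘ (X - C x)).eval y = (P /ₘ (X - C y)).eval x := by
  rcases eq_or_ne x y with rfl | hxy
  · rfl
  have h1 := congrArg (eval y) (X_sub_C_mul_divByMonic_eq_sub_modByMonic P x)
  have h2 := congrArg (eval x) (X_sub_C_mul_divByMonic_eq_sub_modByMonic P y)
  simp only [modByMonic_X_sub_C_eq_C_eval, eval_mul, eval_sub, eval_X, eval_C] at h1 h2
  apply mul_left_cancel₀ (sub_ne_zero.2 hxy.symm)
  linarith

/-- First divided difference matrix of `P` at the nodes `x` in direction `G`. -/
noncomputable def firstDiff (P : ℝ[X]) (x : Fin n → ℝ) (G : Matrix (Fin n) (Fin n) ℂ) :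
    Matrix (Fin n) (Fin n) ℂ :=
  of fun i k => G i k * (((P /ₘ (X - C (x i))).eval (x k) : ℝ) : ℂ)

/-- Second divided difference matrix of `P` at the nodes `x` in direction `G`. -/
noncomputable def secondDiff (P : ℝ[X]) (x : Fin n → ℝ) (G : Matrix (Fin n) (Fin n) ℂ) :
    Matrix (Fin n) (Fin n) ℂ :=
  of fun i k => ∑ j, G i j * G j k *
    (((P /ₘ ((X - C (x i)) * (X - C (x j)))).eval (x k) : ℝ) : ℂ)

lemma firstDiff_add (P Q : ℝ[X]) (x : Fin n → ℝ) (G : Matrix (Fin n) (Fin n) ℂ) :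
    firstDiff (P + Q) x G = firstDiff P x G + firstDiff Q x G := by
  ext i k
  simp [firstDiff, add_divByMonic (monic_X_sub_C _), mul_add]

lemma secondDiff_add (P Q : ℝ[X]) (x : Fin n → ℝ) (G : Matrix (Fin n) (Fin n) ℂ) :
    secondDiff (P + Q) x G = secondDiff P x G + secondDiff Q x G := by
  ext i k
  simp [secondDiff, add_divByMonic ((monic_X_sub_C _).mul (monic_X_sub_C _)), mul_add,
    Finset.sum_add_distrib]

lemma firstDiff_C (c : ℝ) (x : Fin n → ℝ) (G : Matrix (Fin n) (Fin n) ℂ) :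
    firstDiff (C c) x G = 0 := by
  ext i k
  have : (C c : ℝ[X]) /ₘ (X - C (x i)) = 0 := by
    rw [divByMonic_eq_zero_iff (monic_X_sub_C _), degree_X_sub_C]
    exact degree_C_lt.trans_le (by simp)
  simp [firstDiff, this]

lemma secondDiff_C (c : ℝ) (x : Fin n → ℝ) (G : Matrix (Fin n) (Fin n) ℂ) :
    secondDiff (C c) x G = 0 := by
  ext i k
  have (j : Fin n) : (C c : ℝ[X]) /ₘ ((X - C (x i)) * (X - C (x j))) = 0 := by
    rw [divByMonic_eq_zero_iff ((monic_X_sub_C _).mul (monic_X_sub_C _)), degree_mul,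
      degree_X_sub_C, degree_X_sub_C]
    exact degree_C_le.trans_lt (by norm_num)
  simp [secondDiff, this]

lemma firstDiff_X_mul (P : ℝ[X]) (x : Fin n → ℝ) (G : Matrix (Fin n) (Fin n) ℂ) :
    firstDiff (X * P) x G = G * diagonal (fun i => ((P.eval (x i) : ℝ) : ℂ)) +
      diagonal (fun i => (x i : ℂ)) * firstDiff P x G := by
  ext i k
  simp [firstDiff, X_mul_divByMonic_X_sub_C]
  ring

lemma secondDiff_X_mul (P : ℝ[X]) (x : Fin n → ℝ) (G : Matrix (Fin n) (Fin n) ℂ) :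
    secondDiff (X * P) x G = G * firstDiff P x G +
      diagonal (fun i => (x i : ℂ)) * secondDiff P x G := by
  ext i k
  rw [Matrix.add_apply, diagonal_mul, Matrix.mul_apply]
  simp only [secondDiff, X_mul_divByMonic_mul_X_sub_C, firstDiff, of_apply,
    Finset.mul_sum, ← Finset.sum_add_distrib, eval_add, eval_mul, eval_C]
  refine Finset.sum_congr rfl fun j _ => ?_
  push_cast
  ring

/-- Entrywise differentiability of a matrix-valued function. -/
def HasEntryDerivAt (φ : ℝ → Matrix (Fin n) (Fin n) ℂ) (φ' : Matrix (Fin n) (Fin n) ℂ)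
    (s : ℝ) : Prop :=
  ∀ i k, HasDerivAt (fun s => φ s i k) (φ' i k) s

lemma HasEntryDerivAt.add {φ ψ : ℝ → Matrix (Fin n) (Fin n) ℂ}
    {φ' ψ' : Matrix (Fin n) (Fin n) ℂ} {s : ℝ} (hφ : HasEntryDerivAt φ φ' s)
    (hψ : HasEntryDerivAt ψ ψ' s) : HasEntryDerivAt (fun s => φ s + ψ s) (φ' + ψ') s :=
  fun i k => (hφ i k).fun_add (hψ i k)

lemma hasEntryDerivAt_const (M : Matrix (Fin n) (Fin n) ℂ) (s : ℝ) :
    HasEntryDerivAt (fun _ => M) 0 s :=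
  fun i k => hasDerivAt_const s (M i k)

lemma HasEntryDerivAt.mul {φ ψ : ℝ → Matrix (Fin n) (Fin n) ℂ}
    {φ' ψ' : Matrix (Fin n) (Fin n) ℂ} {s : ℝ} (hφ : HasEntryDerivAt φ φ' s)
    (hψ : HasEntryDerivAt ψ ψ' s) :
    HasEntryDerivAt (fun s => φ s * ψ s) (φ' * ψ s + φ s * ψ') s := fun i k => by
  simp only [Matrix.add_apply, Matrix.mul_apply, ← Finset.sum_add_distrib]
  exact HasDerivAt.fun_sum fun j _ => (hφ i j).fun_mul (hψ j k)

lemma hasEntryDerivAt_add_smul (B H : Matrix (Fin n) (Fin n) ℂ) (s : ℝ) :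
    HasEntryDerivAt (fun s : ℝ => B + s • H) H s := fun i k => by
  simpa using ((hasDerivAt_id s).smul_const (H i k)).const_add (B i k)

/-- The function `s ↦ P(B + s H)` is twice differentiable, and its derivatives are given by
divided differences in any orthonormal eigenbasis. -/
lemma exists_hasDerivAt_aeval (B H : Matrix (Fin n) (Fin n) ℂ) (P : ℝ[X]) :
    ∃ φ₁ φ₂ : ℝ → Matrix (Fin n) (Fin n) ℂ,
      (∀ s, HasEntryDerivAt (fun s : ℝ => aeval (B + s • H) P) (φ₁ s) s) ∧
      (∀ s, HasEntryDerivAt φ₁ ((2 : ℝ) • φ₂ s) s) ∧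
      ∀ (s : ℝ) (U : Matrix (Fin n) (Fin n) ℂ) (x : Fin n → ℝ), star U * U = 1 →
        U * star U = 1 → B + s • H = U * diagonal (fun i => (x i : ℂ)) * star U →
        φ₁ s = U * firstDiff P x (star U * H * U) * star U ∧
        φ₂ s = U * secondDiff P x (star U * H * U) * star U := by
  induction P using Polynomial.induction_on with
  | C c =>
    refine ⟨fun _ => 0, fun _ => 0, fun s => ?_, fun s => ?_, fun s U x _ _ _ => ?_⟩
    · simpa using hasEntryDerivAt_const _ s
    · simpa using hasEntryDerivAt_const 0 s
    · simp [firstDiff_C, secondDiff_C]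
  | add p q hp hq =>
    obtain ⟨p₁, p₂, hp₁, hp₂, hp₃⟩ := hp
    obtain ⟨q₁, q₂, hq₁, hq₂, hq₃⟩ := hq
    refine ⟨p₁ + q₁, p₂ + q₂, fun s => ?_, fun s => ?_, fun s U x h h' hD => ?_⟩
    · simpa using (hp₁ s).add (hq₁ s)
    · simpa [Pi.add_def] using (hp₂ s).add (hq₂ s)
    · simp [firstDiff_add, secondDiff_add, hp₃ s U x h h' hD, hq₃ s U x h h' hD, mul_add, add_mul]
  | monomial k c ih =>
    rw [show (C c * X ^ (k + 1) : ℝ[X]) = X * (C c * X ^ k) by ring]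
    generalize (C c * X ^ k : ℝ[X]) = p at ih ⊢
    obtain ⟨p₁, p₂, hp₁, hp₂, hp₃⟩ := ih
    refine ⟨fun s => H * aeval (B + s • H) p + (B + s • H) * p₁ s,
      fun s => H * p₁ s + (B + s • H) * p₂ s, fun s => ?_, fun s => ?_, fun s U x h h' hD => ?_⟩
    · simpa using (hasEntryDerivAt_add_smul B H s).mul (hp₁ s)
    · convert ((hasEntryDerivAt_const H s).mul (hp₁ s)).add
        ((hasEntryDerivAt_add_smul B H s).mul (hp₂ s)) using 1
      · simp only [two_smul, mul_add, zero_mul, zero_add]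
        abel
    · obtain ⟨h₁, h₂⟩ := hp₃ s U x h h' hD
      have hH : H = U * (star U * H * U) * star U := by
        calc H = (U * star U) * H * (U * star U) := by rw [h', one_mul, mul_one]
          _ = _ := by simp only [mul_assoc]
      have key : ∀ M N : Matrix (Fin n) (Fin n) ℂ,
          (U * M * star U) * (U * N * star U) = U * (M * N) * star U := fun M N => by
        calc _ = U * M * (star U * U) * N * star U := by simp only [mul_assoc]
          _ = _ := by rw [h, mul_one]; simp only [mul_assoc]
      beta_reduce
      rw [h₁, h₂, hD, aeval_conj_diagonal h h', firstDiff_X_mul, secondDiff_X_mul]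
      set G := star U * H * U with hG
      rw [hH]
      simp only [key, mul_add, add_mul, and_self]

end MatrixDerivative

section QuadraticForm

open Polynomial

variable {n : ℕ}

/-- The real part of the quadratic form `⟪v, M v⟫`, as a real-linear function of `M`. -/
noncomputable def quadRe (v : Fin n → ℂ) : Matrix (Fin n) (Fin n) ℂ →ₗ[ℝ] ℝ where
  toFun M := (star v ⬝ᵥ (M *ᵥ v)).re
  map_add' M N := by rw [add_mulVec, dotProduct_add, Complex.add_re]
  map_smul' c M := by simp [smul_mulVec, dotProduct_smul]

lemma quadRe_apply (v : Fin n → ℂ) (M : Matrix (Fin n) (Fin n) ℂ) :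
    quadRe v M = (star v ⬝ᵥ (M *ᵥ v)).re := rfl

lemma quadRe_eq_sum (v : Fin n → ℂ) (M : Matrix (Fin n) (Fin n) ℂ) :
    quadRe v M = ∑ i, ∑ k, (star (v i) * M i k * v k).re := by
  simp only [quadRe_apply, dotProduct, mulVec, Finset.mul_sum, Complex.re_sum, Pi.star_apply,
    mul_assoc]

lemma HasEntryDerivAt.quadRe {φ : ℝ → Matrix (Fin n) (Fin n) ℂ}
    {φ' : Matrix (Fin n) (Fin n) ℂ} {s : ℝ} (hφ : HasEntryDerivAt φ φ' s) (v : Fin n → ℂ) :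
    HasDerivAt (fun s => quadRe v (φ s)) (quadRe v φ') s := by
  simp only [quadRe_eq_sum]
  exact HasDerivAt.fun_sum fun i _ => HasDerivAt.fun_sum fun k _ =>
    Complex.reCLM.hasFDerivAt.comp_hasDerivAt s
      (((hφ i k).const_mul (star (v i))).mul_const (v k))

lemma quadRe_conj (v : Fin n → ℂ) (U M : Matrix (Fin n) (Fin n) ℂ) :
    quadRe v (U * M * star U) = quadRe (star U *ᵥ v) M := by
  rw [quadRe_apply, quadRe_apply, ← mulVec_mulVec, ← mulVec_mulVec, dotProduct_mulVec,
    star_mulVec, star_eq_conjTranspose, conjTranspose_conjTranspose]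

lemma quadRe_diagonal (z : Fin n → ℂ) (x : Fin n → ℝ) :
    quadRe z (diagonal fun i => (x i : ℂ)) = ∑ i, x i * ‖z i‖ ^ 2 := by
  simp only [quadRe_apply, dotProduct, mulVec_diagonal, Complex.re_sum, Pi.star_apply]
  refine Finset.sum_congr rfl fun i _ => ?_
  rw [← Complex.normSq_eq_norm_sq, Complex.normSq_apply]
  simp
  ring

lemma quadRe_secondDiff (P : ℝ[X]) (x : Fin n → ℝ) {G : Matrix (Fin n) (Fin n) ℂ}
    (hG : G.IsHermitian) (z : Fin n → ℂ) :
    quadRe z (secondDiff P x G) = ∑ j,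
      ((∑ i, ∑ k, (G j i * z i).re * (G j k * z k).re *
          (P /ₘ ((X - C (x i)) * (X - C (x k)))).eval (x j)) +
        ∑ i, ∑ k, (G j i * z i).im * (G j k * z k).im *
          (P /ₘ ((X - C (x i)) * (X - C (x k)))).eval (x j)) := by
  simp only [← Finset.sum_add_distrib]
  rw [quadRe_eq_sum, Finset.sum_comm' (t' := Finset.univ) (s' := fun _ => Finset.univ) (by simp)]
  conv_rhs => rw [Finset.sum_comm]
  rw [Finset.sum_comm]
  refine Finset.sum_congr rfl fun i _ => ?_
  conv_rhs => rw [Finset.sum_comm]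
  refine Finset.sum_congr rfl fun k _ => ?_
  simp only [secondDiff, of_apply, Finset.mul_sum, Finset.sum_mul, Complex.re_sum]
  refine Finset.sum_congr rfl fun j _ => ?_
  rw [divByMonic_mul _ (monic_X_sub_C _) (monic_X_sub_C _), eval_divByMonic_X_sub_C_comm,
    divByMonic_mul _ (monic_X_sub_C _) (monic_X_sub_C _), ← hG.apply i j]
  generalize eval (x j) (P /ₘ (X - C (x i)) /ₘ (X - C (x k))) = r
  have : star (z i) * (star (G j i) * G j k * (r : ℂ)) * z k =
      (r : ℂ) * (star (G j i * z i) * (G j k * z k)) := by rw [star_mul']; ring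
  rw [this, Complex.re_ofReal_mul, Complex.mul_re]
  simp only [RCLike.star_def, Complex.conj_re, Complex.conj_im]
  ring

lemma neg_le_quadRe_secondDiff (P : ℝ[X]) (x : Fin n → ℝ) {G : Matrix (Fin n) (Fin n) ℂ}
    (hG : G.IsHermitian) (z : Fin n → ℂ) {c δ : ℝ} (hc : ∀ j, ∑ i, ‖G j i * z i‖ ≤ c)
    (hP : ∀ (w : Fin n → ℝ), ∑ i, |w i| ≤ c → ∀ j, -δ ≤
      ∑ i, ∑ k, w i * w k * (P /ₘ ((X - C (x i)) * (X - C (x k)))).eval (x j)) :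
    -(2 * n * δ) ≤ quadRe z (secondDiff P x G) := by
  rw [quadRe_secondDiff P x hG]
  calc -(2 * n * δ) = ∑ j : Fin n, (-δ + -δ) := by simp; ring
    _ ≤ _ := Finset.sum_le_sum fun j _ => add_le_add
      (hP (fun i => (G j i * z i).re)
        ((Finset.sum_le_sum fun i _ => Complex.abs_re_le_norm _).trans (hc j)) j)
      (hP (fun i => (G j i * z i).im)
        ((Finset.sum_le_sum fun i _ => Complex.abs_im_le_norm _).trans (hc j)) j)

lemma norm_entry_le_one {U : Matrix (Fin n) (Fin n) ℂ} (hU : U ∈ Matrix.unitaryGroup (Fin n) ℂ)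
    (i j : Fin n) : ‖star U i j‖ ≤ 1 := by
  rw [star_eq_conjTranspose, conjTranspose_apply, norm_star]
  exact entry_norm_bound_of_unitary hU j i

lemma norm_star_mulVec_le {U : Matrix (Fin n) (Fin n) ℂ}
    (hU : U ∈ Matrix.unitaryGroup (Fin n) ℂ) (v : Fin n → ℂ) (i : Fin n) :
    ‖(star U *ᵥ v) i‖ ≤ ∑ k, ‖v k‖ := by
  simp only [mulVec, dotProduct]
  refine (norm_sum_le _ _).trans (Finset.sum_le_sum fun k _ => ?_)
  rw [norm_mul]
  exact mul_le_of_le_one_left (norm_nonneg _) (norm_entry_le_one hU i k)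

lemma norm_star_mul_mul_le {U : Matrix (Fin n) (Fin n) ℂ}
    (hU : U ∈ Matrix.unitaryGroup (Fin n) ℂ) (H : Matrix (Fin n) (Fin n) ℂ) (i j : Fin n) :
    ‖(star U * H * U) i j‖ ≤ ∑ k, ∑ l, ‖H l k‖ := by
  rw [Matrix.mul_apply]
  refine (norm_sum_le _ _).trans (Finset.sum_le_sum fun k _ => ?_)
  rw [norm_mul]
  refine (mul_le_of_le_one_right (norm_nonneg _) (entry_norm_bound_of_unitary hU k j)).trans ?_
  rw [Matrix.mul_apply]
  refine (norm_sum_le _ _).trans (Finset.sum_le_sum fun l _ => ?_)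
  rw [norm_mul]
  exact mul_le_of_le_one_left (norm_nonneg _) (norm_entry_le_one hU i l)

lemma quadRe_cfc {A : Matrix (Fin n) (Fin n) ℂ} (hA : A.IsHermitian) (f : ℝ → ℝ)
    (v : Fin n → ℂ) :
    quadRe v (hA.cfc f) = ∑ i, f (hA.eigenvalues i) *
      ‖(star (hA.eigenvectorUnitary : Matrix (Fin n) (Fin n) ℂ) *ᵥ v) i‖ ^ 2 := by
  rw [Matrix.IsHermitian.cfc, Unitary.conjStarAlgAut_apply, quadRe_conj,
    ← quadRe_diagonal]
  rfl

lemma abs_quadRe_cfc_sub_le {A : Matrix (Fin n) (Fin n) ℂ} (hA : A.IsHermitian) (f g : ℝ → ℝ)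
    (v : Fin n → ℂ) {ε : ℝ}
    (h : ∀ i, |f (hA.eigenvalues i) - g (hA.eigenvalues i)| ≤ ε) :
    |quadRe v (hA.cfc f) - quadRe v (hA.cfc g)| ≤ n * (∑ k, ‖v k‖) ^ 2 * ε := by
  rw [quadRe_cfc, quadRe_cfc, ← Finset.sum_sub_distrib]
  calc _ ≤ ∑ i : Fin n, ε * (∑ k, ‖v k‖) ^ 2 := by
        refine (Finset.abs_sum_le_sum_abs _ _).trans (Finset.sum_le_sum fun i _ => ?_)
        rw [← sub_mul, abs_mul, abs_of_nonneg (sq_nonneg ‖_‖)]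
        exact mul_le_mul (h i) (pow_le_pow_left₀ (norm_nonneg _)
          (norm_star_mulVec_le hA.eigenvectorUnitary.2 v i) 2) (sq_nonneg _)
          ((abs_nonneg _).trans (h i))
    _ = _ := by simp; ring

lemma cfc_eval_eq_aeval {A : Matrix (Fin n) (Fin n) ℂ} (hA : A.IsHermitian) (P : ℝ[X]) :
    hA.cfc P.eval = aeval A P := by
  rw [← hA.cfc_eq, cfc_polynomial P A hA.isSelfAdjoint]

lemma quadRe_mem_of_eigenvalues_mem {A : Matrix (Fin n) (Fin n) ℂ} (hA : A.IsHermitian)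
    {α β : ℝ} (h : ∀ i, hA.eigenvalues i ∈ Icc α β) (v : Fin n → ℂ) :
    α * quadRe v 1 ≤ quadRe v A ∧ quadRe v A ≤ β * quadRe v 1 := by
  have h1 : hA.cfc (fun _ => 1) = 1 := by
    simpa using cfc_eval_eq_aeval hA 1
  have h2 : hA.cfc id = A := by
    rw [← hA.cfc_eq, cfc_id ℝ A hA.isSelfAdjoint]
  have e1 := quadRe_cfc hA (fun _ => 1) v
  have e2 := quadRe_cfc hA id v
  rw [h1] at e1
  rw [h2] at e2
  rw [e1, e2, Finset.mul_sum, Finset.mul_sum]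
  simp only [id, one_mul]
  exact ⟨Finset.sum_le_sum fun i _ => mul_le_mul_of_nonneg_right (h i).1 (sq_nonneg _),
    Finset.sum_le_sum fun i _ => mul_le_mul_of_nonneg_right (h i).2 (sq_nonneg _)⟩

lemma eigenvalues_mem_of_quadRe_mem {A : Matrix (Fin n) (Fin n) ℂ} (hA : A.IsHermitian)
    {α β : ℝ} (h : ∀ v, α * quadRe v 1 ≤ quadRe v A ∧ quadRe v A ≤ β * quadRe v 1)
    (i : Fin n) : hA.eigenvalues i ∈ Icc α β := by
  have h1 : quadRe (hA.eigenvectorBasis i) 1 = 1 := by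
    rw [quadRe_apply, one_mulVec, dotProduct_comm, ← EuclideanSpace.inner_eq_star_dotProduct]
    simp
  have h2 : quadRe (hA.eigenvectorBasis i) A = hA.eigenvalues i := (hA.eigenvalues_eq i).symm
  simpa [h1, h2] using h (hA.eigenvectorBasis i)

lemma eigenvalues_add_smul_sub_mem {A B : Matrix (Fin n) (Fin n) ℂ} (hA : A.IsHermitian)
    (hB : B.IsHermitian) {α β s : ℝ} (hs : s ∈ Icc (0 : ℝ) 1)
    (hAm : ∀ i, hA.eigenvalues i ∈ Icc α β) (hBm : ∀ i, hB.eigenvalues i ∈ Icc α β)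
    (hC : (B + s • (A - B)).IsHermitian) (i : Fin n) : hC.eigenvalues i ∈ Icc α β := by
  refine eigenvalues_mem_of_quadRe_mem hC (fun v => ?_) i
  have h1 := quadRe_mem_of_eigenvalues_mem hA hAm v
  have h2 := quadRe_mem_of_eigenvalues_mem hB hBm v
  have : quadRe v (B + s • (A - B)) = s * quadRe v A + (1 - s) * quadRe v B := by
    rw [map_add, map_smul, map_sub, smul_eq_mul]; ring
  rw [this]
  have hs0 := hs.1
  have hs1 := sub_nonneg.2 hs.2
  constructor
  · nlinarith [mul_le_mul_of_nonneg_left h1.1 hs0, mul_le_mul_of_nonneg_left h2.1 hs1]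
  · nlinarith [mul_le_mul_of_nonneg_left h1.2 hs0, mul_le_mul_of_nonneg_left h2.2 hs1]

/-- Approximate convexity along a segment of Hermitian matrices, from a lower bound on the
Kraus quadratic forms. -/
lemma quadRe_aeval_add_smul_le {A B : Matrix (Fin n) (Fin n) ℂ} (hA : A.IsHermitian)
    (hB : B.IsHermitian) {α β δ : ℝ} (hδ : 0 ≤ δ)
    (hAm : ∀ i, hA.eigenvalues i ∈ Icc α β) (hBm : ∀ i, hB.eigenvalues i ∈ Icc α β)
    (v : Fin n → ℂ) (P : ℝ[X])
    (hP : ∀ x w : Fin n → ℝ, (∀ i, x i ∈ Icc α β) →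
      ∑ i, |w i| ≤ n * ((∑ k, ∑ l, ‖(A - B) l k‖) * ∑ k, ‖v k‖) → ∀ j, -δ ≤
      ∑ i, ∑ k, w i * w k * (P /ₘ ((X - C (x i)) * (X - C (x k)))).eval (x j))
    {μ : ℝ} (hμ : μ ∈ Icc (0 : ℝ) 1) :
    quadRe v (aeval (B + μ • (A - B)) P) ≤
      μ * quadRe v (aeval A P) + (1 - μ) * quadRe v (aeval B P) + 2 * n * δ := by
  obtain ⟨φ₁, φ₂, h₁, h₂, h₃⟩ := exists_hasDerivAt_aeval B (A - B) P
  have hH : (A - B).IsHermitian := hA.sub hB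
  have hlow : ∀ s ∈ Icc (0 : ℝ) 1, -(2 * n * δ) ≤ quadRe v (φ₂ s) := by
    intro s hs
    have hC : (B + s • (A - B)).IsHermitian := hB.add (hH.smul (IsSelfAdjoint.all s))
    let U : Matrix (Fin n) (Fin n) ℂ := hC.eigenvectorUnitary.1
    have hUm : U ∈ Matrix.unitaryGroup (Fin n) ℂ := hC.eigenvectorUnitary.2
    have hsp : B + s • (A - B) = U * diagonal (fun i => (hC.eigenvalues i : ℂ)) * star U := by
      conv_lhs => rw [hC.spectral_theorem, Unitary.conjStarAlgAut_apply]
      rfl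
    rw [(h₃ s U _ (Unitary.mem_iff.1 hUm).1 (Unitary.mem_iff.1 hUm).2 hsp).2, quadRe_conj]
    refine neg_le_quadRe_secondDiff P _ (isHermitian_conjTranspose_mul_mul U hH) _
      (fun j => ?_) (fun w hw j => hP _ w
        (eigenvalues_add_smul_sub_mem hA hB hs hAm hBm hC) hw j)
    calc _ ≤ ∑ i : Fin n, ((∑ k, ∑ l, ‖(A - B) l k‖) * ∑ k, ‖v k‖) := by
          refine Finset.sum_le_sum fun i _ => ?_
          rw [norm_mul]
          exact mul_le_mul (norm_star_mul_mul_le hUm _ _ _) (norm_star_mulVec_le hUm _ _)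
            (norm_nonneg _) (by positivity)
      _ = _ := by simp
  set c := 2 * n * δ with hc
  have hc0 : 0 ≤ c := by positivity
  have hconv : ConvexOn ℝ (Icc (0 : ℝ) 1)
      (fun s => quadRe v (aeval (B + s • (A - B)) P) + c * s ^ 2) := by
    have hd : ∀ s, HasDerivAt (fun s => quadRe v (aeval (B + s • (A - B)) P) + c * s ^ 2)
        (quadRe v (φ₁ s) + c * (2 * s)) s := fun s => by
      simpa using ((h₁ s).quadRe v).fun_add ((hasDerivAt_pow 2 s).const_mul c)
    have hd' : ∀ s, HasDerivAt (fun s => quadRe v (φ₁ s) + c * (2 * s))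
        (2 * quadRe v (φ₂ s) + c * 2) s := fun s => by
      simpa using ((h₂ s).quadRe v).fun_add
        (((hasDerivAt_id s).const_mul (2 : ℝ)).const_mul c)
    refine convexOn_of_hasDerivWithinAt2_nonneg (convex_Icc 0 1)
      (fun s _ => (hd s).continuousAt.continuousWithinAt)
      (fun s _ => (hd s).hasDerivWithinAt) (fun s _ => (hd' s).hasDerivWithinAt) fun s hs => ?_
    linarith [hlow s (interior_subset hs)]
  have := hconv.2 (right_mem_Icc.2 zero_le_one) (left_mem_Icc.2 zero_le_one) hμ.1
    (sub_nonneg.2 hμ.2) (by ring)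
  simp only [smul_eq_mul, mul_one, mul_zero, add_zero, one_smul, zero_smul,
    add_sub_cancel] at this
  nlinarith [mul_le_mul_of_nonneg_left hμ.2 hc0, mul_nonneg hc0 (sq_nonneg μ)]

end QuadraticForm

lemma quadRe_cfc_convex {n : ℕ} (hn : 0 < n) {a b α β : ℝ} (hα : α ∈ Ioo a b)
    (hβ : β ∈ Ioo a b) (hαβ : α ≤ β) {f : ℝ → ℝ}
    (hf : ContDiffOn ℝ (2 * n : ℕ) f (Ioo a b))
    (hK : ∀ t ∈ Ioo a b,
      (Matrix.of fun i j : Fin n =>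
        iteratedDerivWithin (i.val + j.val + 2) f (Ioo a b) t /
          (Nat.factorial (i.val + j.val + 2) : ℝ)).PosSemidef)
    {A B : Matrix (Fin n) (Fin n) ℂ} (hA : A.IsHermitian) (hB : B.IsHermitian)
    (hAm : ∀ i, hA.eigenvalues i ∈ Icc α β) (hBm : ∀ i, hB.eigenvalues i ∈ Icc α β)
    {μ : ℝ} (hμ : μ ∈ Icc (0 : ℝ) 1) (hC : (B + μ • (A - B)).IsHermitian) (v : Fin n → ℂ) :
    quadRe v (hC.cfc f) ≤ μ * quadRe v (hA.cfc f) + (1 - μ) * quadRe v (hB.cfc f) := by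
  set c : ℝ := n * ((∑ k, ∑ l, ‖(A - B) l k‖) * ∑ k, ‖v k‖) with hc
  set κ : ℝ := (2 * n).factorial * n ^ 2 * (c * (1 + (β - α)) ^ n) ^ 2 with hκ
  have hκ0 : 0 ≤ κ := by positivity
  set ν : ℝ := n * (∑ k, ‖v k‖) ^ 2 with hν
  have hν0 : 0 ≤ ν := by positivity
  have hCm := eigenvalues_add_smul_sub_mem hA hB hμ hAm hBm hC
  have hsub : Icc α β ⊆ Ioo a b := fun t ht => ⟨hα.1.trans_le ht.1, ht.2.trans_lt hβ.2⟩
  have key : ∀ ε > 0, quadRe v (hC.cfc f) ≤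
      μ * quadRe v (hA.cfc f) + (1 - μ) * quadRe v (hB.cfc f) + (2 * ν + 2 * n * κ) * ε := by
    intro ε hε
    obtain ⟨P, hP⟩ := exists_polynomial_near_iteratedDerivWithin hα hβ hαβ (2 * n) f hf ε hε
    have hP0 : ∀ t ∈ Icc α β, |P.eval t - f t| ≤ ε := fun t ht => by
      simpa using hP 0 (Nat.zero_le _) t ht
    have hPt : ∀ m ≤ 2 * n, ∀ t ∈ Icc α β, |(Polynomial.taylor t P).coeff m -
        iteratedDerivWithin m f (Ioo a b) t / (m.factorial : ℝ)| ≤ ε := by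
      intro m hm t ht
      have h1 : (1 : ℝ) ≤ m.factorial := by exact_mod_cast m.factorial_pos
      have hm0 : (m.factorial : ℝ) ≠ 0 := by positivity
      have h2 : (Polynomial.taylor t P).coeff m =
          (Polynomial.derivative^[m] P).eval t / (m.factorial : ℝ) := by
        rw [Polynomial.taylor_coeff, ← Polynomial.factorial_smul_hasseDeriv, eq_div_iff hm0]
        simp [mul_comm]
      rw [h2, ← sub_div, abs_div, abs_of_nonneg (zero_le_one.trans h1)]
      exact (div_le_self (abs_nonneg _) h1).trans (hP m hm t ht)
    have hconv := quadRe_aeval_add_smul_le hA hB (δ := κ * ε) (by positivity) hAm hBm v P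
      (fun x w hx hw j => neg_le_sum_kraus_of_hankel hn hαβ hε.le
        (fun m t => iteratedDerivWithin m f (Ioo a b) t / (m.factorial : ℝ))
        (fun t ht => hK t (hsub ht)) P hPt x w hx hw j) hμ
    rw [← cfc_eval_eq_aeval hA, ← cfc_eval_eq_aeval hB, ← cfc_eval_eq_aeval hC] at hconv
    have eA := (abs_le.1 (abs_quadRe_cfc_sub_le hA P.eval f v fun i => hP0 _ (hAm i))).2
    have eB := (abs_le.1 (abs_quadRe_cfc_sub_le hB P.eval f v fun i => hP0 _ (hBm i))).2
    have eC := (abs_le.1 (abs_quadRe_cfc_sub_le hC P.eval f v fun i => hP0 _ (hCm i))).1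
    nlinarith [mul_le_mul_of_nonneg_left eA hμ.1,
      mul_le_mul_of_nonneg_left eB (sub_nonneg.2 hμ.2)]
  refine le_of_forall_pos_le_add fun ε hε => ?_
  have hpos : 0 < 2 * ν + 2 * n * κ + 1 := by positivity
  refine (key (ε / (2 * ν + 2 * n * κ + 1)) (by positivity)).trans ?_
  gcongr
  rw [mul_div_assoc', div_le_iff₀ hpos]
  nlinarith

lemma Matrix.IsHermitian.isHermitian_cfc {n : ℕ} {A : Matrix (Fin n) (Fin n) ℂ}
    (hA : A.IsHermitian) (f : ℝ → ℝ) : (hA.cfc f).IsHermitian := by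
  rw [← hA.cfc_eq]
  exact cfc_predicate f A

/-- If the Hankel matrix `K_n(t,f)` is positive semi-definite for every `t ∈ (a,b)`, then `f`
is matrix convex of order `n` on `(a,b)`:
`f(μA + (1-μ)B) ≤ μ f(A) + (1-μ) f(B)` for Hermitian `A, B` with spectra in `(a,b)` and
`μ ∈ [0,1]` (matrix functions via the functional calculus for Hermitian matrices). -/
theorem stmt17 (n : ℕ) (hn : 2 ≤ n) (a b : ℝ) (f : ℝ → ℝ)
    (hf : ContDiffOn ℝ (2 * n : ℕ) f (Ioo a b))
    (hK : ∀ t ∈ Ioo a b,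
      (Matrix.of fun i j : Fin n =>
        iteratedDerivWithin (i.val + j.val + 2) f (Ioo a b) t /
          (Nat.factorial (i.val + j.val + 2) : ℝ)).PosSemidef) :
    ∀ (A B : Matrix (Fin n) (Fin n) ℂ) (hA : A.IsHermitian) (hB : B.IsHermitian)
      (μ : ℝ) (hμ : μ ∈ Icc (0 : ℝ) 1)
      (hC : (μ • A + (1 - μ) • B).IsHermitian),
      (∀ i, hA.eigenvalues i ∈ Ioo a b) → (∀ i, hB.eigenvalues i ∈ Ioo a b) →
      (μ • hA.cfc f + (1 - μ) • hB.cfc f - hC.cfc f).PosSemidef := by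
  intro A B hA hB μ hμ hC hAm hBm
  have hsa : ∀ r : ℝ, IsSelfAdjoint r := IsSelfAdjoint.all
  have hherm : (μ • hA.cfc f + (1 - μ) • hB.cfc f - hC.cfc f).IsHermitian :=
    (((hA.isHermitian_cfc f).smul (hsa _)).add ((hB.isHermitian_cfc f).smul (hsa _))).sub
      (hC.isHermitian_cfc f)
  refine PosSemidef.of_dotProduct_mulVec_nonneg hherm fun v => ?_
  rw [Complex.nonneg_iff]
  refine ⟨?_, (hherm.im_star_dotProduct_mulVec_self v).symm⟩
  let S : Finset ℝ := Finset.univ.image hA.eigenvalues ∪ Finset.univ.image hB.eigenvalues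
  have hSA : ∀ i, hA.eigenvalues i ∈ S := fun i => by simp [S]
  have hSB : ∀ i, hB.eigenvalues i ∈ S := fun i => by simp [S]
  have hS : S.Nonempty := ⟨_, hSA ⟨0, by omega⟩⟩
  have hSm : ∀ y ∈ S, y ∈ Ioo a b := by
    intro y hy
    simp only [S, Finset.mem_union, Finset.mem_image, Finset.mem_univ, true_and] at hy
    rcases hy with ⟨i, rfl⟩ | ⟨i, rfl⟩
    exacts [hAm i, hBm i]
  have hSI : ∀ y ∈ S, y ∈ Icc (S.min' hS) (S.max' hS) :=
    fun y hy => ⟨S.min'_le y hy, S.le_max' y hy⟩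
  have heq : μ • A + (1 - μ) • B = B + μ • (A - B) := by
    rw [sub_smul, one_smul, smul_sub]; abel
  have hmain : ∀ (D : Matrix (Fin n) (Fin n) ℂ) (hD : D.IsHermitian), D = B + μ • (A - B) →
      quadRe v (hD.cfc f) ≤ μ * quadRe v (hA.cfc f) + (1 - μ) * quadRe v (hB.cfc f) := by
    rintro D hD rfl
    exact quadRe_cfc_convex (by omega) (hSm _ (S.min'_mem hS)) (hSm _ (S.max'_mem hS))
      (S.min'_le_max' hS) hf hK hA hB (fun i => hSI _ (hSA i)) (fun i => hSI _ (hSB i)) hμ hD v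
  have := hmain _ hC heq
  rw [← quadRe_apply, map_sub, map_add, map_smul, map_smul, smul_eq_mul, smul_eq_mul]
  linarith
end
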